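/- arXiv:2501.14972 — 5 statements merged into one kernel-verified Lean document; each statement's English description precedes it below -/
import Mathlib

section
/- Single-mode estimate for the drift term: let d ≥ 1 and let a, b : ℤ^d → ℂ satisfy ∑_{k} |a(k)|² < ∞, ∑_{k} |k| |a(k)|² < ∞ and ∑_{k} |k| |b(k)|² < ∞. Then for every l ∈ ℤ^d the family (a(−l−k) b(k) k)_{k∈ℤ^d} of vectors in ℂ^d is summable, and the Euclidean norm of its sum satisfies ‖∑_{k∈ℤ^d} a(−l−k) b(k) k‖ ≤ (∑_{k} |k| |a(k)|²)^{1/2} (∑_{k} |k| |b(k)|²)^{1/2} + |l|^{1/2} (∑_{k} |a(k)|²)^{1/2} (∑_{k} |k| |b(k)|²)^{1/2}. -/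
/-!
Since `|k| ≤ |-l-k| + |l|`, subadditivity of the square root gives
`|k| ≤ |k|^{1/2} (|-l-k|^{1/2} + |l|^{1/2})`. Hence the norm of `a(-l-k) b(k) k` is at most
`(|-l-k|^{1/2} |a(-l-k)|) (|k|^{1/2} |b(k)|) + |l|^{1/2} |a(-l-k)| (|k|^{1/2} |b(k)|)`
(`norm_modeVec_le`). Cauchy–Schwarz (`summable_and_tsum_mul_le`) applied to each summand,
together with invariance of the sums of `a` under the reflection `k ↦ -l-k`, gives both
absolute summability and the bound.
-/

open scoped BigOperators

/-- Euclidean norm of a lattice point `k ∈ ℤ^d`. -/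
noncomputable def znorm {d : ℕ} (k : Fin d → ℤ) : ℝ :=
  Real.sqrt (∑ i, ((k i : ℝ)) ^ 2)

/-- The vector `a(−l−k) b(k) k ∈ ℂ^d` (with the Euclidean norm). -/
noncomputable def modeVec {d : ℕ} (a b : (Fin d → ℤ) → ℂ) (l k : Fin d → ℤ) :
    EuclideanSpace ℂ (Fin d) :=
  (WithLp.equiv 2 (Fin d → ℂ)).symm (fun i => a (-l - k) * b k * (k i : ℂ))

lemma znorm_nonneg {d : ℕ} (k : Fin d → ℤ) : 0 ≤ znorm k := Real.sqrt_nonneg _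

lemma znorm_eq_norm {d : ℕ} (k : Fin d → ℤ) :
    znorm k = ‖WithLp.toLp 2 (fun i => (k i : ℝ))‖ := by
  simp [znorm, EuclideanSpace.norm_eq]

/-- Subadditivity in the form used below: `k = -(-l-k) - l`. -/
lemma znorm_le_shift {d : ℕ} (l k : Fin d → ℤ) :
    znorm k ≤ znorm (-l - k) + znorm l := by
  rw [znorm_eq_norm, znorm_eq_norm, znorm_eq_norm]
  rw [← norm_neg]
  refine le_trans (le_of_eq ?_) (norm_add_le _ _)
  congr 1
  ext i
  simp only [PiLp.neg_apply, PiLp.add_apply, Pi.sub_apply, Pi.neg_apply]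
  push_cast
  ring

lemma norm_modeVec {d : ℕ} (a b : (Fin d → ℤ) → ℂ) (l k : Fin d → ℤ) :
    ‖modeVec a b l k‖ = ‖a (-l - k)‖ * ‖b k‖ * znorm k := by
  have h : modeVec a b l k =
      (a (-l - k) * b k) • WithLp.toLp 2 (fun i => (k i : ℂ)) := by
    ext i
    simp [modeVec]
  rw [h, norm_smul, norm_mul]
  simp [znorm, EuclideanSpace.norm_eq]

/-- The Cauchy–Schwarz inequality for nonnegative sequences in `ℓ²`. -/
lemma summable_and_tsum_mul_le {ι : Type*} {f g : ι → ℝ} (hf0 : ∀ i, 0 ≤ f i)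
    (hg0 : ∀ i, 0 ≤ g i) (hf : Summable fun i => f i ^ 2) (hg : Summable fun i => g i ^ 2) :
    (Summable fun i => f i * g i) ∧
      ∑' i, f i * g i ≤ √(∑' i, f i ^ 2) * √(∑' i, g i ^ 2) := by
  have h := Real.inner_le_Lp_mul_Lq_tsum_of_nonneg Real.HolderConjugate.two_two hf0 hg0
    (by simpa using hf) (by simpa using hg)
  have hs := Real.summable_mul_of_Lp_Lq_of_nonneg Real.HolderConjugate.two_two hf0 hg0
    (by simpa using hf) (by simpa using hg)
  exact ⟨hs, by simpa [Real.sqrt_eq_rpow] using h⟩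

/-- The pointwise bound `|k| ≤ |k|^{1/2} (|-l-k|^{1/2} + |l|^{1/2})`, weighted by the
coefficients. -/
lemma norm_modeVec_le {d : ℕ} (a b : (Fin d → ℤ) → ℂ) (l k : Fin d → ℤ) :
    ‖modeVec a b l k‖ ≤
      (√(znorm (-l - k)) * ‖a (-l - k)‖) * (√(znorm k) * ‖b k‖) +
        √(znorm l) * (‖a (-l - k)‖ * (√(znorm k) * ‖b k‖)) := by
  have h1 : √(znorm k) ≤ √(znorm (-l - k)) + √(znorm l) :=
    (Real.sqrt_le_sqrt (znorm_le_shift l k)).trans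
      (by
        rw [Real.sqrt_le_left (by positivity), add_sq, Real.sq_sqrt (znorm_nonneg _),
          Real.sq_sqrt (znorm_nonneg _)]
        have : 0 ≤ 2 * √(znorm (-l - k)) * √(znorm l) := by positivity
        linarith)
  have h2 : √(znorm k) * √(znorm k) = znorm k := Real.mul_self_sqrt (znorm_nonneg k)
  calc ‖modeVec a b l k‖
      = √(znorm k) * (‖a (-l - k)‖ * (√(znorm k) * ‖b k‖)) := by
        rw [norm_modeVec]
        linear_combination -(‖a (-l - k)‖ * ‖b k‖) * h2
    _ ≤ (√(znorm (-l - k)) + √(znorm l)) * (‖a (-l - k)‖ * (√(znorm k) * ‖b k‖)) := by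
        gcongr
    _ = _ := by ring

lemma summable_reflect {d : ℕ} (l : Fin d → ℤ) {f : (Fin d → ℤ) → ℝ} (hf : Summable f) :
    Summable fun k => f (-l - k) :=
  (Equiv.subLeft (-l)).summable_iff.mpr hf

lemma tsum_reflect {d : ℕ} (l : Fin d → ℤ) (f : (Fin d → ℤ) → ℝ) :
    ∑' k, f (-l - k) = ∑' k, f k :=
  (Equiv.subLeft (-l)).tsum_eq f

/-- **Single-mode estimate for the drift term.**
If `∑ |a k|² < ∞`, `∑ |k| |a k|² < ∞` and `∑ |k| |b k|² < ∞`, then for every `l`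
the family `(a(−l−k) b(k) k)_k ⊂ ℂ^d` is summable and
`‖∑_k a(−l−k) b(k) k‖ ≤ (∑ |k||a k|²)^{1/2} (∑ |k||b k|²)^{1/2}
  + |l|^{1/2} (∑ |a k|²)^{1/2} (∑ |k||b k|²)^{1/2}`. -/
theorem single_mode_estimate (d : ℕ) (hd : 1 ≤ d) (a b : (Fin d → ℤ) → ℂ)
    (ha1 : Summable fun k => ‖a k‖ ^ 2)
    (ha2 : Summable fun k => znorm k * ‖a k‖ ^ 2)
    (hb : Summable fun k => znorm k * ‖b k‖ ^ 2)
    (l : Fin d → ℤ) :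
    Summable (modeVec a b l) ∧
      ‖∑' k, modeVec a b l k‖ ≤
        Real.sqrt (∑' k, znorm k * ‖a k‖ ^ 2) * Real.sqrt (∑' k, znorm k * ‖b k‖ ^ 2) +
          Real.sqrt (znorm l) * Real.sqrt (∑' k, ‖a k‖ ^ 2) *
            Real.sqrt (∑' k, znorm k * ‖b k‖ ^ 2) := by
  have hsq : ∀ (c : (Fin d → ℤ) → ℂ) k, (√(znorm k) * ‖c k‖) ^ 2 = znorm k * ‖c k‖ ^ 2 := by
    intro c k
    rw [mul_pow, Real.sq_sqrt (znorm_nonneg k)]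
  have hB : Summable fun k => (√(znorm k) * ‖b k‖) ^ 2 := by simpa only [hsq] using hb
  have hA2 : Summable fun k => (√(znorm (-l - k)) * ‖a (-l - k)‖) ^ 2 := by
    simp only [hsq a]
    exact summable_reflect l ha2
  have hA1 : Summable fun k => ‖a (-l - k)‖ ^ 2 := summable_reflect l ha1
  have eA2 : ∑' k, (√(znorm (-l - k)) * ‖a (-l - k)‖) ^ 2 = ∑' k, znorm k * ‖a k‖ ^ 2 := by
    simp only [hsq a]
    exact tsum_reflect l fun k => znorm k * ‖a k‖ ^ 2
  have eA1 : ∑' k, ‖a (-l - k)‖ ^ 2 = ∑' k, ‖a k‖ ^ 2 := tsum_reflect l fun k => ‖a k‖ ^ 2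
  obtain ⟨s1, t1⟩ := summable_and_tsum_mul_le
    (f := fun k => √(znorm (-l - k)) * ‖a (-l - k)‖) (g := fun k => √(znorm k) * ‖b k‖)
    (fun k => by positivity) (fun k => by positivity) hA2 hB
  obtain ⟨s2, t2⟩ := summable_and_tsum_mul_le
    (f := fun k => ‖a (-l - k)‖) (g := fun k => √(znorm k) * ‖b k‖)
    (fun k => norm_nonneg (a (-l - k))) (fun k => by positivity) hA1 hB
  simp only [hsq b] at t1 t2
  rw [eA2] at t1
  rw [eA1] at t2
  have s3 := s2.mul_left √(znorm l)
  have hle := norm_modeVec_le a b l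
  have hs : Summable fun k => ‖modeVec a b l k‖ :=
    Summable.of_nonneg_of_le (fun k => norm_nonneg _) hle (s1.add s3)
  refine ⟨hs.of_norm, (norm_tsum_le_tsum_norm hs).trans ?_⟩
  refine (hs.tsum_le_tsum hle (s1.add s3)).trans ?_
  rw [s1.tsum_add s3, tsum_mul_left, mul_assoc]
  gcongr
end

section
/- Coercivity bound, part (i): let d ≥ 1, K > 0, β > 1/2 and M₁ ≥ 0. There exist constants γ₁ > 0 and γ₂ ≥ 0, depending only on K, M₁ and β, with the following property: for every W : ℤ^d → ℂ with c(W) := (2π)^{−d/2}(∑_l |W(l)| |l| + ∑_l |W(l)| |l|^{3/2}) ≤ M₁ and every a : ℤ^d → ℂ with a(0) = 0 and ∑_k |k|^{2β} |a(k)|² < ∞, one has γ₁ ∑_k (1 + |k|^{2β}) |a(k)|² ≤ K ∑_k |k|^{2β} |a(k)|² − (2π)^{−d/2} |∑_{l∈ℤ^d} ∑_{k∈ℤ^d} W(l) a(−l−k) a(k) (l·k)| + γ₂ ∑_k |a(k)|². (Equivalently, γ₁‖u‖²_{H^β} ≤ B[u,u] + γ₂‖u‖² for the bilinear form B[u,v]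 = ∫ K (−Δ)^{β/2}u (−Δ)^{β/2}v + (u∇V)·∇v dx and zero-mean u.) -/
/-!
Write `S = ∑ |k||a k|²`, `T = ∑ |k|^{2β}|a k|²`, `N = ∑ |a k|²`. Since `a 0 = 0` and `|k| ≥ 1` for
`k ≠ 0`, both `S` and `N` are finite once `T` is.

From `|l·k| ≤ |l||k|^{1/2}|k|^{1/2}` and `|k|^{1/2} ≤ |l|^{1/2} + |l+k|^{1/2}`, the half-derivative
is shared between the two factors: with `b k = |k|^{1/2}|a k|`,
`|W l a(-l-k) a(k) (l·k)| ≤ |W l|(|l| + |l|^{3/2}) b(k) b(-l-k)` (`norm_term_le`). Summing over `k`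
with `xy ≤ (x²+y²)/2` and then over `l`, the trilinear sum times `(2π)^{-d/2}` is at most
`c(W) S ≤ M₁ S`. As `2β > 1`, a Young-type inequality (`exists_le_rpow_add`) gives
`S ≤ ε T + C N`; the choice `ε = K / (2 (M₁ + 1))` absorbs the `T` part into half of `K T`, so
`γ₁ = K/2` and `γ₂ = M₁ C + K/2` work.
-/

open scoped BigOperators

/-- Dot product `l · k` of lattice points, as a complex number. -/
def zdot {d : ℕ} (l k : Fin d → ℤ) : ℂ :=
  ((∑ i, l i * k i : ℤ) : ℂ)

/-- The constant `c(W) = (2π)^{−d/2} (∑ |W l||l| + ∑ |W l||l|^{3/2})`. -/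
noncomputable def cW {d : ℕ} (W : (Fin d → ℤ) → ℂ) : ℝ :=
  (2 * Real.pi) ^ (-(d : ℝ) / 2) *
    ((∑' l, ‖W l‖ * znorm l) + ∑' l, ‖W l‖ * znorm l ^ ((3 : ℝ) / 2))

lemma one_le_znorm {d : ℕ} {k : Fin d → ℤ} (hk : k ≠ 0) : 1 ≤ znorm k := by
  obtain ⟨i, hi⟩ := Function.ne_iff.mp hk
  have h1 : (1 : ℝ) ≤ (k i : ℝ) ^ 2 := by
    have : (1 : ℤ) ≤ (k i) ^ 2 := by
      have := sq_pos_of_ne_zero (a := k i) (by simpa using hi)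
      omega
    exact_mod_cast this
  unfold znorm
  rw [Real.one_le_sqrt]
  exact h1.trans (Finset.single_le_sum (f := fun i => (k i : ℝ) ^ 2)
    (fun i _ => sq_nonneg _) (Finset.mem_univ i))

lemma znorm_le_add {d : ℕ} (l k : Fin d → ℤ) : znorm k ≤ znorm l + znorm (-l - k) := by
  simp only [znorm_eq_norm]
  have h : WithLp.toLp 2 (fun i => (k i : ℝ)) =
      -(WithLp.toLp 2 (fun i => (l i : ℝ)) + WithLp.toLp 2 (fun i => ((-l - k) i : ℝ))) := by
    ext i
    simp
  rw [h, norm_neg]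
  exact norm_add_le _ _

lemma norm_zdot_le {d : ℕ} (l k : Fin d → ℤ) : ‖zdot l k‖ ≤ znorm l * znorm k := by
  have h := abs_real_inner_le_norm (WithLp.toLp 2 (fun i => (l i : ℝ)))
    (WithLp.toLp 2 (fun i => (k i : ℝ)))
  rw [← znorm_eq_norm, ← znorm_eq_norm] at h
  refine le_trans (le_of_eq ?_) h
  rw [zdot, Complex.norm_intCast]
  simp [PiLp.inner_apply, mul_comm]

/-- The half-derivative in `l · k` is distributed evenly over the two factors `a k`, `a (-l-k)`;
the vanishing of `a 0` is what allows `|l|^{3/2}|k|^{1/2}` to be multiplied by `|l+k|^{1/2} ≥ 1`. -/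
lemma norm_term_le {d : ℕ} (W a : (Fin d → ℤ) → ℂ) (ha : a 0 = 0) (l k : Fin d → ℤ) :
    ‖W l * a (-l - k) * a k * zdot l k‖ ≤
      (‖W l‖ * znorm l + ‖W l‖ * znorm l ^ ((3 : ℝ) / 2)) *
        ((znorm k * ‖a k‖ ^ 2 + znorm (-l - k) * ‖a (-l - k)‖ ^ 2) / 2) := by
  have hl := znorm_nonneg l
  have hk := znorm_nonneg k
  have hm := znorm_nonneg (-l - k)
  have h32 : znorm l ^ ((3 : ℝ) / 2) = znorm l * √(znorm l) := by
    rw [Real.sqrt_eq_rpow, show (3 : ℝ) / 2 = 1 + 1 / 2 by norm_num,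
      Real.rpow_add_of_nonneg hl (by norm_num) (by norm_num), Real.rpow_one]
  rw [h32]
  by_cases h0 : -l - k = 0
  · rw [h0] at hm ⊢
    rw [ha]
    simp only [mul_zero, zero_mul, norm_zero]
    positivity
  have h1 : 1 ≤ √(znorm (-l - k)) := Real.one_le_sqrt.mpr (one_le_znorm h0)
  set m := -l - k
  have hsub : √(znorm k) ≤ √(znorm l) + √(znorm m) := by
    rw [Real.sqrt_le_left (by positivity)]
    have := znorm_le_add l k
    nlinarith [Real.sq_sqrt hl, Real.sq_sqrt hm, Real.sqrt_nonneg (znorm l),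
      Real.sqrt_nonneg (znorm m), mul_nonneg (Real.sqrt_nonneg (znorm l))
        (Real.sqrt_nonneg (znorm m))]
  have hsub' : √(znorm k) ≤ (1 + √(znorm l)) * √(znorm m) := by
    nlinarith [Real.sqrt_nonneg (znorm l)]
  have hkk : znorm k ≤ (1 + √(znorm l)) * √(znorm m) * √(znorm k) := by
    nlinarith [Real.mul_self_sqrt hk, Real.sqrt_nonneg (znorm k)]
  have hyoung : (√(znorm m) * ‖a m‖) * (√(znorm k) * ‖a k‖) ≤
      (znorm k * ‖a k‖ ^ 2 + znorm m * ‖a m‖ ^ 2) / 2 := by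
    have := two_mul_le_add_sq (√(znorm m) * ‖a m‖) (√(znorm k) * ‖a k‖)
    rw [mul_pow, mul_pow, Real.sq_sqrt hk, Real.sq_sqrt hm] at this
    linarith
  calc ‖W l * a m * a k * zdot l k‖ = ‖W l‖ * ‖a m‖ * ‖a k‖ * ‖zdot l k‖ := by
        simp only [norm_mul]
    _ ≤ ‖W l‖ * ‖a m‖ * ‖a k‖ * (znorm l * ((1 + √(znorm l)) * √(znorm m) * √(znorm k))) := by
        gcongr
        exact (norm_zdot_le l k).trans (by gcongr)
    _ = (‖W l‖ * znorm l + ‖W l‖ * (znorm l * √(znorm l))) *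
          ((√(znorm m) * ‖a m‖) * (√(znorm k) * ‖a k‖)) := by ring
    _ ≤ _ := by gcongr

/-- A first power is dominated by a small multiple of a higher power plus a constant. -/
lemma exists_le_rpow_add {p ε : ℝ} (hp : 1 < p) (hε : 0 < ε) :
    ∃ C : ℝ, 0 ≤ C ∧ ∀ t : ℝ, 0 ≤ t → t ≤ ε * t ^ p + C := by
  -- the threshold `ε^{-1/(p-1)}` is where `t = ε t^p`
  refine ⟨(1 / ε) ^ (1 / (p - 1)), by positivity, fun t ht => ?_⟩
  have hp' : 0 < p - 1 := by linarith
  rcases le_or_gt t ((1 / ε) ^ (1 / (p - 1))) with h | h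
  · have : 0 ≤ ε * t ^ p := by positivity
    linarith
  · have hC : 0 ≤ (1 / ε) ^ (1 / (p - 1)) := by positivity
    have h1 : 1 / ε ≤ t ^ (p - 1) := by
      have := Real.rpow_le_rpow hC h.le hp'.le
      rwa [← Real.rpow_mul (by positivity), one_div_mul_cancel hp'.ne', Real.rpow_one] at this
    have h2 : t ^ p = t ^ (p - 1) * t := by
      rw [← Real.rpow_add_one (hC.trans_lt h).ne', sub_add_cancel]
    have h3 : 1 ≤ ε * t ^ (p - 1) := by
      rw [div_le_iff₀ hε] at h1
      linarith
    rw [h2]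
    nlinarith

/-- The trilinear sum is bounded by `(∑ |W||l| + ∑ |W||l|^{3/2}) ∑ |k||a k|²`. -/
lemma norm_trilinear_le {d : ℕ} (W a : (Fin d → ℤ) → ℂ) (ha : a 0 = 0)
    (hW1 : Summable (fun l => ‖W l‖ * znorm l))
    (hW2 : Summable (fun l => ‖W l‖ * znorm l ^ ((3 : ℝ) / 2)))
    (hS : Summable (fun k => znorm k * ‖a k‖ ^ 2)) :
    ‖∑' l, ∑' k, W l * a (-l - k) * a k * zdot l k‖ ≤
      ((∑' l, ‖W l‖ * znorm l) + ∑' l, ‖W l‖ * znorm l ^ ((3 : ℝ) / 2)) *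
        ∑' k, znorm k * ‖a k‖ ^ 2 := by
  refine tsum_of_norm_bounded ((hW1.hasSum.add hW2.hasSum).mul_right _) fun l => ?_
  -- `k ↦ -l - k` permutes the lattice, so both halves of Young's inequality sum to the same value
  have hS2 : HasSum (fun k => znorm (-l - k) * ‖a (-l - k)‖ ^ 2)
      (∑' k, znorm k * ‖a k‖ ^ 2) :=
    ((Equiv.subLeft (-l)).hasSum_iff (f := fun k => znorm k * ‖a k‖ ^ 2)).mpr hS.hasSum
  have h := ((hS.hasSum.add hS2).div_const 2).mul_left
    (‖W l‖ * znorm l + ‖W l‖ * znorm l ^ ((3 : ℝ) / 2))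
  rw [add_self_div_two] at h
  exact tsum_of_norm_bounded h fun k => norm_term_le W a ha l k

/-- **Coercivity bound, part (i).**
For `K > 0`, `β > 1/2` and `M₁ ≥ 0` there exist `γ₁ > 0`, `γ₂ ≥ 0` (depending only on
`K`, `M₁`, `β`) such that for every `W` with `c(W) ≤ M₁` and every zero-mean `a` with
`∑ |k|^{2β}|a k|² < ∞`,
`γ₁ ∑ (1+|k|^{2β})|a k|² ≤ K ∑ |k|^{2β}|a k|²
  − (2π)^{−d/2}|∑_l ∑_k W(l)a(−l−k)a(k)(l·k)| + γ₂ ∑ |a k|²`;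
equivalently `γ₁‖u‖²_{H^β} ≤ B[u,u] + γ₂‖u‖²`. -/
theorem coercivity_bound_i (d : ℕ) (hd : 1 ≤ d) (K : ℝ) (hK : 0 < K) (β : ℝ)
    (hβ : 1 / 2 < β) (M₁ : ℝ) (hM₁ : 0 ≤ M₁) :
    ∃ γ₁ γ₂ : ℝ, 0 < γ₁ ∧ 0 ≤ γ₂ ∧ ∀ W a : (Fin d → ℤ) → ℂ,
      Summable (fun l => ‖W l‖ * znorm l) →
      Summable (fun l => ‖W l‖ * znorm l ^ ((3 : ℝ) / 2)) →
      cW W ≤ M₁ →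
      a 0 = 0 →
      Summable (fun k => znorm k ^ (2 * β) * ‖a k‖ ^ 2) →
      γ₁ * ∑' k, (1 + znorm k ^ (2 * β)) * ‖a k‖ ^ 2 ≤
        K * ∑' k, znorm k ^ (2 * β) * ‖a k‖ ^ 2 -
          (2 * Real.pi) ^ (-(d : ℝ) / 2) *
            ‖∑' l, ∑' k, W l * a (-l - k) * a k * zdot l k‖ +
          γ₂ * ∑' k, ‖a k‖ ^ 2 := by
  set ε := K / (2 * (M₁ + 1)) with hε
  have hεpos : 0 < ε := by positivity
  obtain ⟨C, hC, hCt⟩ := exists_le_rpow_add (p := 2 * β) (by linarith) hεpos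
  refine ⟨K / 2, M₁ * C + K / 2, by positivity, by positivity, ?_⟩
  intro W a hW1 hW2 hc ha hT
  have hN : Summable (fun k => ‖a k‖ ^ 2) := by
    refine hT.of_nonneg_of_le (fun k => by positivity) fun k => ?_
    by_cases hk : k = 0
    · simp [hk, ha]
    · exact le_mul_of_one_le_left (by positivity)
        (Real.one_le_rpow (one_le_znorm hk) (by linarith))
  have hpt : ∀ k, znorm k * ‖a k‖ ^ 2 ≤
      ε * (znorm k ^ (2 * β) * ‖a k‖ ^ 2) + C * ‖a k‖ ^ 2 := fun k => by
    have := mul_le_mul_of_nonneg_right (hCt _ (znorm_nonneg k)) (sq_nonneg ‖a k‖)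
    linarith
  have hεC := (hT.mul_left ε).add (hN.mul_left C)
  have hS : Summable (fun k => znorm k * ‖a k‖ ^ 2) :=
    hεC.of_nonneg_of_le (fun k => mul_nonneg (znorm_nonneg k) (sq_nonneg _)) hpt
  have hSle : ∑' k, znorm k * ‖a k‖ ^ 2 ≤
      ε * ∑' k, znorm k ^ (2 * β) * ‖a k‖ ^ 2 + C * ∑' k, ‖a k‖ ^ 2 := by
    rw [← tsum_mul_left, ← tsum_mul_left, ← (hT.mul_left ε).tsum_add (hN.mul_left C)]
    exact hS.tsum_le_tsum hpt hεC
  have hS0 : 0 ≤ ∑' k, znorm k * ‖a k‖ ^ 2 :=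
    tsum_nonneg fun k => mul_nonneg (znorm_nonneg k) (sq_nonneg _)
  have hT0 : 0 ≤ ∑' k, znorm k ^ (2 * β) * ‖a k‖ ^ 2 :=
    tsum_nonneg fun k => mul_nonneg (Real.rpow_nonneg (znorm_nonneg k) _) (sq_nonneg _)
  have hsplit : ∑' k, (1 + znorm k ^ (2 * β)) * ‖a k‖ ^ 2 =
      ∑' k, ‖a k‖ ^ 2 + ∑' k, znorm k ^ (2 * β) * ‖a k‖ ^ 2 := by
    rw [← hN.tsum_add hT]
    exact tsum_congr fun k => by ring
  have hform : (2 * Real.pi) ^ (-(d : ℝ) / 2) *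
      ‖∑' l, ∑' k, W l * a (-l - k) * a k * zdot l k‖ ≤
        M₁ * ∑' k, znorm k * ‖a k‖ ^ 2 := by
    refine le_trans ?_ (mul_le_mul_of_nonneg_right hc hS0)
    rw [cW, mul_assoc]
    exact mul_le_mul_of_nonneg_left (norm_trilinear_le W a ha hW1 hW2 hS) (by positivity)
  have hMε : M₁ * ε ≤ K / 2 := by
    rw [hε, ← mul_div_assoc, div_le_div_iff₀ (by positivity) (by norm_num)]
    nlinarith
  have h1 := mul_le_mul_of_nonneg_left hSle hM₁
  have h2 := mul_le_mul_of_nonneg_right hMε hT0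
  rw [hsplit]
  linarith
end

section
/- Differential Grönwall inequality for the Caputo fractional derivative: let α ∈ (0,1), T > 0, c > 0, let φ : [0,T] → ℝ be a nonnegative integrable function, and let ζ : [0,T] → ℝ be a nonnegative, nondecreasing, integrable function. Suppose there is an integrable function g : [0,T] → ℝ such that I^{1−α}(φ − φ(0))(t) = ∫₀ᵗ g(s) ds for all t ∈ [0,T] (so g is the Caputo fractional derivative of φ of order α), and that g(t) ≤ c φ(t) + ζ(t) for almost every t ∈ [0,T]. Then for almost every t ∈ [0,T], φ(t) ≤ (I^α ζ(t) + φ(0)) E_α(c t^α). -/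
/-!
Everything is done with `ℝ≥0∞`-valued convolutions on `ℝ`, where associativity needs no
integrability. Let `K_a(x) = x^(a-1)/Γ(a)` on `(0,∞)` and `0` elsewhere (`rlKernel`); for `f ≥ 0`
on `[0,T]`, the fractional integral `I^a f` on `[0,T]` is the convolution of `K_a` with the
extension of `f` by zero (`fracInt_eq_toReal`). The Beta integral gives the semigroup law
`K_a ⋆ K_b = K_{a+b}` (`rlKernel_lconvolution`).

*Volterra inequality.* Splitting `g = g⁺ - g⁻`, the Caputo hypothesis reads
`K_{1-α} ⋆ φ + K_1 ⋆ g⁻ = K_{1-α} ⋆ φ(0) + K_1 ⋆ g⁺`. Convolving with `K_α` gives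
`K_1 ⋆ (φ + K_α ⋆ g⁻) = K_1 ⋆ (φ(0) + K_α ⋆ g⁺)` on `(-∞,T]`, and since `K_1 ⋆ F` is the
primitive of `F`, the two integrands agree a.e. (`caputo_inversion`). With `g⁺ ≤ c φ + ζ + g⁻` this
yields `φ ≤ A + c K_α ⋆ φ` a.e., where `A = φ(0) + K_α ⋆ ζ`.

*Iteration.* `A` is nondecreasing because `ζ` is, so `K_{kα} ⋆ A ≤ A · K_{kα+1}`, and iterating the
Volterra inequality produces the partial sums of `A(t) E_α(c t^α)` plus the remainder
`c^n K_{nα} ⋆ φ` (`volterra_iterate`). The remainder is at most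
`c^n T^(nα-1)/Γ(nα) · ‖φ‖₁`, which tends to `0` by the super-exponential growth of `Γ`
(`rpow_le_Gamma`, `tendsto_remainder`).
-/

open MeasureTheory

/-- The Riemann–Liouville fractional integral
`I^α φ (t) = (1/Γ(α)) ∫₀ᵗ (t−τ)^{α−1} φ(τ) dτ`. -/
noncomputable def fracInt (α : ℝ) (φ : ℝ → ℝ) (t : ℝ) : ℝ :=
  (1 / Real.Gamma α) * ∫ τ in (0 : ℝ)..t, (t - τ) ^ (α - 1) * φ τ

/-- The Mittag-Leffler function `E_α(x) = ∑_{k=0}^∞ x^k / Γ(αk + 1)` (real argument). -/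
noncomputable def mittagLeffler (α x : ℝ) : ℝ :=
  ∑' k : ℕ, x ^ k / Real.Gamma (α * k + 1)

open Set Filter Topology
open scoped ENNReal

/-! ### Kernels and extensions by zero -/

/-- The Riemann–Liouville kernel `K_a(x) = x^(a-1)/Γ(a)` for `x > 0`, extended by zero to `ℝ` and
regarded as `ℝ≥0∞`-valued, so that convolution with it is always defined. -/
noncomputable def rlKernel (a x : ℝ) : ℝ≥0∞ :=
  (Ioi (0 : ℝ)).indicator (fun x => ENNReal.ofReal (x ^ (a - 1) / Real.Gamma a)) x

/-- The extension by zero to `ℝ` of a nonnegative function on `[0,T]`, as an `ℝ≥0∞`-valued function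
(negative values of `f` are cut off at `0`). -/
noncomputable def zeroExt (T : ℝ) (f : ℝ → ℝ) (x : ℝ) : ℝ≥0∞ :=
  (Icc (0 : ℝ) T).indicator (fun x => ENNReal.ofReal (f x)) x

lemma rlKernel_of_pos {a x : ℝ} (hx : 0 < x) :
    rlKernel a x = ENNReal.ofReal (x ^ (a - 1) / Real.Gamma a) := by
  simp [rlKernel, hx]

lemma rlKernel_of_nonpos {a x : ℝ} (hx : x ≤ 0) : rlKernel a x = 0 := by
  simp [rlKernel, hx]

@[fun_prop]
lemma measurable_rlKernel (a : ℝ) : Measurable (rlKernel a) := by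
  unfold rlKernel
  exact Measurable.indicator (by fun_prop) measurableSet_Ioi

lemma rlKernel_one_of_pos {x : ℝ} (hx : 0 < x) : rlKernel 1 x = 1 := by
  simp [rlKernel_of_pos hx]

lemma zeroExt_of_mem {T x : ℝ} {f : ℝ → ℝ} (hx : x ∈ Icc 0 T) :
    zeroExt T f x = ENNReal.ofReal (f x) := by
  simp only [zeroExt, indicator_of_mem hx]

lemma zeroExt_of_neg {T x : ℝ} {f : ℝ → ℝ} (hx : x < 0) : zeroExt T f x = 0 := by
  rw [zeroExt, indicator_of_notMem]
  simp [hx]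

lemma aemeasurable_zeroExt {T : ℝ} {f : ℝ → ℝ} (hf : IntegrableOn f (Icc 0 T)) :
    AEMeasurable (zeroExt T f) := by
  unfold zeroExt
  rw [aemeasurable_indicator_iff measurableSet_Icc]
  exact hf.aemeasurable.ennreal_ofReal

lemma lintegral_zeroExt_ne_top {T : ℝ} {f : ℝ → ℝ} (hf : IntegrableOn f (Icc 0 T)) :
    ∫⁻ x, zeroExt T f x ≠ ∞ := by
  unfold zeroExt
  rw [lintegral_indicator measurableSet_Icc]
  exact (Integrable.lintegral_lt_top hf).ne

/-- Semigroup law for the kernels: the rescaled Beta integral. -/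
lemma rlKernel_lconvolution {a b : ℝ} (ha : 0 < a) (hb : 0 < b) :
    rlKernel a ⋆ₗ rlKernel b = rlKernel (a + b) := by
  ext t
  rw [lconvolution_def]
  rcases le_or_gt t 0 with ht | ht
  · rw [rlKernel_of_nonpos ht]
    rw [lintegral_eq_zero_iff (by fun_prop)]
    refine Eventually.of_forall fun y => ?_
    rcases le_or_gt y 0 with hy | hy
    · simp [rlKernel_of_nonpos hy]
    · simp [rlKernel_of_nonpos (show -y + t ≤ 0 by linarith)]
  · have hmap := Real.smul_map_volume_mul_left ht.ne'
    rw [← hmap, lintegral_smul_measure, lintegral_map (by fun_prop) (by fun_prop)]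
    have key : ∀ x, rlKernel a (t * x) * rlKernel b (-(t * x) + t) =
        ENNReal.ofReal (t ^ (a + b - 2) / Real.Gamma (a + b)) *
          ProbabilityTheory.betaPDF a b x := by
      intro x
      rcases le_or_gt x 0 with hx | hx
      · rw [ProbabilityTheory.betaPDF_eq_zero_of_nonpos hx, rlKernel_of_nonpos]
        · simp
        · exact mul_nonpos_of_nonneg_of_nonpos ht.le hx
      rcases le_or_gt 1 x with hx1 | hx1
      · rw [ProbabilityTheory.betaPDF_eq_zero_of_one_le hx1, rlKernel_of_nonpos (a := b)]
        · simp
        · nlinarith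
      have h1 : 0 < 1 - x := by linarith
      have e : -(t * x) + t = t * (1 - x) := by ring
      rw [ProbabilityTheory.betaPDF_of_pos_lt_one hx hx1, e, rlKernel_of_pos (by positivity),
        rlKernel_of_pos (by positivity), ← ENNReal.ofReal_mul, ← ENNReal.ofReal_mul]
      · congr 1
        have := (Real.Gamma_pos_of_pos ha).ne'
        have := (Real.Gamma_pos_of_pos hb).ne'
        have := (Real.Gamma_pos_of_pos (add_pos ha hb)).ne'
        rw [Real.mul_rpow ht.le hx.le, Real.mul_rpow ht.le h1.le,
          show a + b - 2 = (a - 1) + (b - 1) by ring, Real.rpow_add ht, ProbabilityTheory.beta]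
        field_simp
      · have := (Real.Gamma_pos_of_pos (add_pos ha hb)).le
        positivity
      · have := (Real.Gamma_pos_of_pos ha).le
        positivity
    simp_rw [key]
    rw [lintegral_const_mul' _ _ ENNReal.ofReal_ne_top,
      ProbabilityTheory.lintegral_betaPDF_eq_one ha hb, mul_one, rlKernel_of_pos ht, smul_eq_mul,
      ← ENNReal.ofReal_mul (abs_nonneg _), abs_of_pos ht]
    congr 1
    rw [show a + b - 1 = (a + b - 2) + 1 by ring, Real.rpow_add_one ht.ne']
    ring

lemma rlKernel_lconvolution_lconvolution {a b : ℝ} (ha : 0 < a) (hb : 0 < b) {F : ℝ → ℝ≥0∞}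
    (hF : AEMeasurable F) :
    rlKernel a ⋆ₗ (rlKernel b ⋆ₗ F) = rlKernel (a + b) ⋆ₗ F := by
  rw [lconvolution_assoc₀ (by fun_prop) (by fun_prop) hF, rlKernel_lconvolution ha hb]

/-! ### Convolution with the kernels -/

lemma lconvolution_add_right {a : ℝ} {F G : ℝ → ℝ≥0∞} (hF : AEMeasurable F) (t : ℝ) :
    (rlKernel a ⋆ₗ (fun s => F s + G s)) t = (rlKernel a ⋆ₗ F) t + (rlKernel a ⋆ₗ G) t := by
  simp only [lconvolution_def, mul_add]
  rw [lintegral_add_left']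
  refine (measurable_rlKernel a).aemeasurable.mul ?_
  exact hF.comp_quasiMeasurePreserving
    (((measurePreserving_add_right volume t).comp
      (Measure.measurePreserving_neg volume)).quasiMeasurePreserving)

lemma lconvolution_const_mul {a : ℝ} {c : ℝ≥0∞} (hc : c ≠ ∞) {F : ℝ → ℝ≥0∞} (t : ℝ) :
    (rlKernel a ⋆ₗ (fun s => c * F s)) t = c * (rlKernel a ⋆ₗ F) t := by
  simp only [lconvolution_def, mul_left_comm _ c]
  rw [lintegral_const_mul' _ _ hc]

/-- Causality and positivity: up to time `T` the convolution depends, monotonically, only on the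
values of the function up to time `T`. -/
lemma lconvolution_mono {a t T : ℝ} (ht : t ≤ T) {F G : ℝ → ℝ≥0∞}
    (h : ∀ᵐ s, s ≤ T → F s ≤ G s) :
    (rlKernel a ⋆ₗ F) t ≤ (rlKernel a ⋆ₗ G) t := by
  simp only [lconvolution_def]
  have hq := (((measurePreserving_add_right volume t).comp
      (Measure.measurePreserving_neg (volume : Measure ℝ))).quasiMeasurePreserving)
  refine lintegral_mono_ae ?_
  filter_upwards [hq.ae h] with y hy
  rcases le_or_gt y 0 with h0 | h0
  · simp [rlKernel_of_nonpos h0]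
  · gcongr
    exact hy (show -y + t ≤ T by linarith)

lemma lconvolution_of_nonpos {a t : ℝ} (ht : t ≤ 0) {F : ℝ → ℝ≥0∞} (hF : ∀ s < 0, F s = 0) :
    (rlKernel a ⋆ₗ F) t = 0 := by
  have : (rlKernel a ⋆ₗ F) t ≤ (rlKernel a ⋆ₗ 0) t := by
    refine lconvolution_mono le_rfl ?_
    filter_upwards [Measure.ae_ne volume (0 : ℝ)] with s hs hst
    rw [hF s (lt_of_le_of_ne (hst.trans ht) hs)]
    simp
  simpa using this

lemma rlKernel_one_lconvolution (F : ℝ → ℝ≥0∞) (t : ℝ) :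
    (rlKernel 1 ⋆ₗ F) t = ∫⁻ s in Iio t, F s := by
  rw [lconvolution_comm, lconvolution_def, ← lintegral_indicator measurableSet_Iio]
  congr 1
  ext s
  rcases lt_or_ge s t with h | h
  · rw [rlKernel_one_of_pos (by linarith)]
    simp [h]
  · rw [rlKernel_of_nonpos (by linarith)]
    simp [h]

/-- For `b ≥ 1` the kernel is nondecreasing on `(0,∞)`, hence bounded by its value at `T` on the
range that meets the support of `F`. -/
lemma lconvolution_le {b t T : ℝ} (hb : 1 ≤ b) (ht : t ≤ T) {F : ℝ → ℝ≥0∞}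
    (hF : ∀ s < 0, F s = 0) :
    (rlKernel b ⋆ₗ F) t ≤ ENNReal.ofReal (T ^ (b - 1) / Real.Gamma b) * ∫⁻ s, F s := by
  rw [lconvolution_comm, lconvolution_def, ← lintegral_const_mul' _ _ ENNReal.ofReal_ne_top]
  refine lintegral_mono fun s => ?_
  rw [mul_comm]
  rcases lt_or_ge s 0 with hs | hs
  · simp [hF s hs]
  gcongr
  rcases le_or_gt (-s + t) 0 with h | h
  · simp [rlKernel_of_nonpos h]
  rw [rlKernel_of_pos h]
  have := (Real.Gamma_pos_of_pos (show 0 < b by linarith))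
  apply ENNReal.ofReal_le_ofReal
  gcongr
  linarith

lemma lconvolution_ne_top {b t : ℝ} (hb : 1 ≤ b) {F : ℝ → ℝ≥0∞}
    (hF : ∀ s < 0, F s = 0) (hFi : ∫⁻ s, F s ≠ ∞) : (rlKernel b ⋆ₗ F) t ≠ ∞ :=
  ((lconvolution_le hb le_rfl hF).trans_lt
    (ENNReal.mul_lt_top ENNReal.ofReal_lt_top hFi.lt_top)).ne

/-- Fractional integrals of an integrable function are finite a.e.: their primitive
`K_1 ⋆ (K_a ⋆ F) = K_{a+1} ⋆ F` is finite. -/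
lemma lconvolution_ae_ne_top {a T : ℝ} (ha : 0 < a) {F : ℝ → ℝ≥0∞} (hm : AEMeasurable F)
    (hF : ∀ s < 0, F s = 0) (hFi : ∫⁻ s, F s ≠ ∞) :
    ∀ᵐ t, t ≤ T → (rlKernel a ⋆ₗ F) t ≠ ∞ := by
  have h1 : ∫⁻ s in Iio T, (rlKernel a ⋆ₗ F) s ≠ ∞ := by
    rw [← rlKernel_one_lconvolution, rlKernel_lconvolution_lconvolution one_pos ha hm]
    exact lconvolution_ne_top (by linarith) hF hFi
  have h2 := ae_lt_top'
    (aemeasurable_lconvolution (measurable_rlKernel a).aemeasurable hm).restrict h1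
  rw [ae_restrict_iff' measurableSet_Iio] at h2
  filter_upwards [h2, Measure.ae_ne volume T] with t ht htT h
  exact (ht (lt_of_le_of_ne h htT)).ne

/-- Two functions with the same finite primitive on `(-∞,T]` agree a.e. there: the measures with
these densities have the same distribution function. -/
lemma ae_eq_of_lconvolution_one_eq {T : ℝ} {F G : ℝ → ℝ≥0∞} (hF : AEMeasurable F)
    (hG : AEMeasurable G)
    (h : ∀ t ≤ T, (rlKernel 1 ⋆ₗ F) t = (rlKernel 1 ⋆ₗ G) t)
    (hT : (rlKernel 1 ⋆ₗ F) T ≠ ∞) : ∀ᵐ t, t ≤ T → F t = G t := by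
  have hT' := hT
  rw [h T le_rfl] at hT'
  simp only [rlKernel_one_lconvolution] at h hT hT'
  have hfinF := isFiniteMeasure_withDensity hT
  have hfinG := isFiniteMeasure_withDensity hT'
  have hmeas : (volume.restrict (Iio T)).withDensity F =
      (volume.restrict (Iio T)).withDensity G := by
    refine Measure.ext_of_Iic _ _ fun a => ?_
    rw [withDensity_apply _ measurableSet_Iic, withDensity_apply _ measurableSet_Iic,
      Measure.restrict_restrict measurableSet_Iic]
    have : (Iic a ∩ Iio T : Set ℝ) =ᵐ[volume] Iio (min a T) := by
      rw [← Iio_inter_Iio]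
      exact Iio_ae_eq_Iic.symm.inter (ae_eq_refl _)
    rw [Measure.restrict_congr_set this]
    exact h _ (min_le_right _ _)
  rw [withDensity_eq_iff hF.restrict hG.restrict hT, EventuallyEq,
    ae_restrict_iff' measurableSet_Iio] at hmeas
  filter_upwards [hmeas, Measure.ae_ne volume T] with t ht htT h
  exact ht (lt_of_le_of_ne h htT)

/-! ### Growth of the Gamma function -/

/-- Lower bound for `Γ` by the tail `(M,∞)` of its integral; as `M` is arbitrary, `Γ` outgrows every
exponential. -/
lemma rpow_le_Gamma {M s : ℝ} (hM : 0 < M) (hs : 1 ≤ s) :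
    M ^ (s - 1) * Real.exp (-M) ≤ Real.Gamma s := by
  rw [Real.Gamma_eq_integral (by linarith)]
  have hi := Real.GammaIntegral_convergent (show 0 < s by linarith)
  calc M ^ (s - 1) * Real.exp (-M) = ∫ x in Ioi M, M ^ (s - 1) * Real.exp (-x) := by
        rw [integral_const_mul, integral_exp_neg_Ioi]
    _ ≤ ∫ x in Ioi M, Real.exp (-x) * x ^ (s - 1) := by
        refine setIntegral_mono_on ((integrableOn_exp_neg_Ioi M).const_mul _)
          (hi.mono_set (Ioi_subset_Ioi hM.le)) measurableSet_Ioi fun x hx => ?_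
        rw [mul_comm]
        gcongr
        exact le_of_lt hx
    _ ≤ _ := by
        refine setIntegral_mono_set hi ?_ (Ioi_subset_Ioi hM.le).eventuallyLE
        filter_upwards [ae_restrict_mem measurableSet_Ioi] with x hx
        have : (0:ℝ) < x := hx
        simp only [Pi.zero_apply]
        positivity

/-- The value of `M` for which `rpow_le_Gamma` makes the terms `x^k/Γ(αk+1)` decay like `2^(-k)`. -/
lemma exists_rpow_eq {α x : ℝ} (hα : 0 < α) (hx : 0 < x) : ∃ M : ℝ, 0 < M ∧ M ^ α = 2 * x := by
  refine ⟨(2 * x) ^ (α⁻¹), by positivity, ?_⟩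
  rw [← Real.rpow_mul (by positivity), inv_mul_cancel₀ hα.ne', Real.rpow_one]

lemma summable_mittagLeffler {α x : ℝ} (hα : 0 < α) (hx : 0 < x) :
    Summable fun k : ℕ => x ^ k / Real.Gamma (α * k + 1) := by
  obtain ⟨M, hM, hMx⟩ := exists_rpow_eq hα hx
  refine Summable.of_nonneg_of_le (fun k => ?_) (fun k => ?_)
    (summable_geometric_two.mul_left (Real.exp M))
  · have := Real.Gamma_pos_of_pos (show 0 < α * k + 1 by positivity)
    positivity
  · have hG := Real.Gamma_pos_of_pos (show 0 < α * k + 1 by positivity)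
    have h := rpow_le_Gamma hM (show 1 ≤ α * k + 1 by
      have : 0 ≤ α * k := by positivity
      linarith)
    rw [add_sub_cancel_right, Real.rpow_mul hM.le, hMx, Real.rpow_natCast, Real.exp_neg] at h
    rw [div_le_iff₀ hG]
    calc x ^ k = Real.exp M * (1 / 2) ^ k * ((2 * x) ^ k * (Real.exp M)⁻¹) := by
          rw [mul_pow, one_div, inv_pow]; field_simp
      _ ≤ _ := by gcongr

lemma tendsto_remainder {α c T : ℝ} (hα : 0 < α) (hc : 0 < c) (hT : 0 < T) :
    Tendsto (fun n : ℕ => c ^ n * (T ^ (n * α - 1) / Real.Gamma (n * α))) atTop (𝓝 0) := by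
  obtain ⟨M, hM, hMx⟩ := exists_rpow_eq hα (show 0 < c * T ^ α by positivity)
  have hlim : Tendsto (fun n : ℕ => Real.exp M * (M / T) * (1 / 2 : ℝ) ^ n) atTop (𝓝 0) := by
    simpa using (tendsto_pow_atTop_nhds_zero_of_lt_one (r := (1 / 2 : ℝ)) (by norm_num)
      (by norm_num)).const_mul (Real.exp M * (M / T))
  have hev : ∀ᶠ n : ℕ in atTop, 1 ≤ (n : ℝ) * α :=
    (tendsto_natCast_atTop_atTop.atTop_mul_const hα).eventually_ge_atTop 1
  refine squeeze_zero' ?_ ?_ hlim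
  · filter_upwards [hev] with n hn
    have := Real.Gamma_pos_of_pos (show 0 < n * α by linarith)
    positivity
  · filter_upwards [hev] with n hn
    have hG := Real.Gamma_pos_of_pos (show 0 < n * α by linarith)
    have h := rpow_le_Gamma hM hn
    rw [Real.rpow_sub_one hM.ne', mul_comm _ α, Real.rpow_mul hM.le, hMx, Real.rpow_natCast,
      Real.exp_neg, mul_comm α] at h
    rw [← mul_div_assoc, div_le_iff₀ hG]
    rw [Real.rpow_sub_one hT.ne', mul_comm _ α, Real.rpow_mul hT.le, Real.rpow_natCast,
      mul_comm α]
    calc c ^ n * ((T ^ α) ^ n / T) = Real.exp M * (M / T) * (1 / 2) ^ n *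
          ((2 * (c * T ^ α)) ^ n / M * (Real.exp M)⁻¹) := by
          rw [mul_pow, mul_pow, one_div, inv_pow]; field_simp
      _ ≤ _ := by gcongr

/-! ### Fractional integrals as convolutions -/

lemma lconvolution_zeroExt {a t T : ℝ} (ha : 0 < a) {f : ℝ → ℝ}
    (ht : t ∈ Icc 0 T) :
    (rlKernel a ⋆ₗ zeroExt T f) t =
      ∫⁻ τ in Ioc 0 t, ENNReal.ofReal ((t - τ) ^ (a - 1) / Real.Gamma a * f τ) := by
  have hG := Real.Gamma_pos_of_pos ha
  rw [lconvolution_comm, lconvolution_def, ← lintegral_indicator measurableSet_Ioc]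
  refine lintegral_congr_ae ?_
  filter_upwards [Measure.ae_ne volume t, Measure.ae_ne volume 0] with τ hτ hτ0
  by_cases hm : τ ∈ Ioc 0 t
  · have hlt : 0 < t - τ := sub_pos.2 (lt_of_le_of_ne hm.2 hτ)
    rw [indicator_of_mem hm, zeroExt_of_mem ⟨hm.1.le, hm.2.trans ht.2⟩,
      show -τ + t = t - τ by ring, rlKernel_of_pos hlt, mul_comm,
      ← ENNReal.ofReal_mul (by positivity)]
  · rw [indicator_of_notMem hm]
    rcases le_or_gt τ 0 with h | h
    · simp [zeroExt_of_neg (lt_of_le_of_ne h hτ0)]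
    · have : t < τ := by
        by_contra! h'
        exact hm ⟨h, h'⟩
      simp [rlKernel_of_nonpos (show -τ + t ≤ 0 by linarith)]

lemma fracInt_eq_integral (a t : ℝ) (f : ℝ → ℝ) (ht : 0 ≤ t) :
    fracInt a f t = ∫ τ in Ioc 0 t, (t - τ) ^ (a - 1) / Real.Gamma a * f τ := by
  rw [fracInt, intervalIntegral.integral_of_le ht, ← integral_const_mul]
  congr 1
  ext τ
  ring

section link
variable {a t T : ℝ} {f : ℝ → ℝ}

lemma aestronglyMeasurable_rl (hf : IntegrableOn f (Icc 0 T)) (ht : t ∈ Icc 0 T) :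
    AEStronglyMeasurable (fun τ => (t - τ) ^ (a - 1) / Real.Gamma a * f τ)
      (volume.restrict (Ioc 0 t)) := by
  refine AEStronglyMeasurable.mul (Measurable.aestronglyMeasurable (by fun_prop)) ?_
  exact (hf.mono_set (fun x hx => ⟨hx.1.le, hx.2.trans ht.2⟩)).aestronglyMeasurable

lemma ae_nonneg_rl (ha : 0 < a) (hf0 : ∀ s ∈ Icc (0 : ℝ) T, 0 ≤ f s) (ht : t ∈ Icc 0 T) :
    0 ≤ᵐ[volume.restrict (Ioc 0 t)] fun τ => (t - τ) ^ (a - 1) / Real.Gamma a * f τ := by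
  have hG := Real.Gamma_pos_of_pos ha
  filter_upwards [ae_restrict_mem measurableSet_Ioc] with τ hτ
  have h1 := hf0 τ ⟨hτ.1.le, hτ.2.trans ht.2⟩
  have h2 : 0 ≤ t - τ := sub_nonneg.2 hτ.2
  simp only [Pi.zero_apply]
  positivity

/-- No finiteness is needed: if the convolution is infinite, the Bochner integral is not defined and
both sides are `0`. -/
lemma fracInt_eq_toReal (ha : 0 < a) (hf : IntegrableOn f (Icc 0 T))
    (hf0 : ∀ s ∈ Icc (0 : ℝ) T, 0 ≤ f s) (ht : t ∈ Icc 0 T) :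
    fracInt a f t = ((rlKernel a ⋆ₗ zeroExt T f) t).toReal := by
  rw [fracInt_eq_integral _ _ _ ht.1, lconvolution_zeroExt ha ht,
    integral_eq_lintegral_of_nonneg_ae (ae_nonneg_rl ha hf0 ht) (aestronglyMeasurable_rl hf ht)]

lemma integrableOn_rl (ha : 0 < a) (hf : IntegrableOn f (Icc 0 T))
    (hf0 : ∀ s ∈ Icc (0 : ℝ) T, 0 ≤ f s) (ht : t ∈ Icc 0 T)
    (hfin : (rlKernel a ⋆ₗ zeroExt T f) t ≠ ∞) :
    IntegrableOn (fun τ => (t - τ) ^ (a - 1) / Real.Gamma a * f τ) (Ioc 0 t) := by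
  refine ⟨aestronglyMeasurable_rl hf ht, ?_⟩
  rw [hasFiniteIntegral_iff_ofReal (ae_nonneg_rl ha hf0 ht), ← lconvolution_zeroExt ha ht]
  exact hfin.lt_top

end link

lemma fracInt_sub_eq {a t T : ℝ} {f h : ℝ → ℝ} (ha : 0 < a) (hf : IntegrableOn f (Icc 0 T))
    (hf0 : ∀ s ∈ Icc (0 : ℝ) T, 0 ≤ f s) (hh : IntegrableOn h (Icc 0 T))
    (hh0 : ∀ s ∈ Icc (0 : ℝ) T, 0 ≤ h s) (ht : t ∈ Icc 0 T)
    (hfinf : (rlKernel a ⋆ₗ zeroExt T f) t ≠ ∞) (hfinh : (rlKernel a ⋆ₗ zeroExt T h) t ≠ ∞) :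
    fracInt a (fun s => f s - h s) t = ((rlKernel a ⋆ₗ zeroExt T f) t).toReal -
      ((rlKernel a ⋆ₗ zeroExt T h) t).toReal := by
  rw [← fracInt_eq_toReal ha hf hf0 ht, ← fracInt_eq_toReal ha hh hh0 ht,
    fracInt_eq_integral _ _ _ ht.1, fracInt_eq_integral _ _ _ ht.1, fracInt_eq_integral _ _ _ ht.1,
    ← integral_sub (integrableOn_rl ha hf hf0 ht hfinf) (integrableOn_rl ha hh hh0 ht hfinh)]
  simp only [mul_sub]

lemma fracInt_one (g : ℝ → ℝ) (t : ℝ) : fracInt 1 g t = ∫ s in (0 : ℝ)..t, g s := by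
  simp [fracInt]

/-! ### The Volterra inequality and its iteration -/

/-- Inversion of the Caputo derivative: `φ = φ₀ + I^α g` a.e., with `g⁺` and `g⁻` on opposite sides to
stay within `ℝ≥0∞`. -/
lemma caputo_inversion {α T φ₀ : ℝ} (hα0 : 0 < α) (hα1 : α < 1) (hφ₀ : 0 ≤ φ₀) {φ g : ℝ → ℝ}
    (hφint : IntegrableOn φ (Icc 0 T)) (hφ0 : ∀ t ∈ Icc (0 : ℝ) T, 0 ≤ φ t)
    (hgint : IntegrableOn g (Icc 0 T))
    (hcaputo : ∀ t ∈ Icc (0 : ℝ) T,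
      fracInt (1 - α) (fun s => φ s - φ₀) t = ∫ s in (0 : ℝ)..t, g s) :
    ∀ᵐ t, t ≤ T →
      zeroExt T φ t + (rlKernel α ⋆ₗ zeroExt T (fun s => max (-g s) 0)) t =
        zeroExt T (fun _ => φ₀) t + (rlKernel α ⋆ₗ zeroExt T (fun s => max (g s) 0)) t := by
  set P := zeroExt T φ with hP
  set P₀ := zeroExt T (fun _ => φ₀) with hP₀
  set Gp := zeroExt T (fun s => max (g s) 0) with hGp
  set Gm := zeroExt T (fun s => max (-g s) 0) with hGm
  have hα1' : 0 < 1 - α := by linarith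
  have hcint : IntegrableOn (fun _ : ℝ => φ₀) (Icc 0 T) := by simp
  have hgp : IntegrableOn (fun s => max (g s) 0) (Icc 0 T) := hgint.pos_part
  have hgm : IntegrableOn (fun s => max (-g s) 0) (Icc 0 T) := hgint.neg_part
  have mP : AEMeasurable P := aemeasurable_zeroExt hφint
  have mP₀ : AEMeasurable P₀ := aemeasurable_zeroExt hcint
  have mGp : AEMeasurable Gp := aemeasurable_zeroExt hgp
  have mGm : AEMeasurable Gm := aemeasurable_zeroExt hgm
  have fP := lintegral_zeroExt_ne_top hφint
  have fP₀ := lintegral_zeroExt_ne_top hcint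
  have fGp := lintegral_zeroExt_ne_top hgp
  have fGm := lintegral_zeroExt_ne_top hgm
  have zP : ∀ s < 0, P s = 0 := fun s hs => zeroExt_of_neg hs
  have zP₀ : ∀ s < 0, P₀ s = 0 := fun s hs => zeroExt_of_neg hs
  have zGp : ∀ s < 0, Gp s = 0 := fun s hs => zeroExt_of_neg hs
  have zGm : ∀ s < 0, Gm s = 0 := fun s hs => zeroExt_of_neg hs
  -- The Caputo hypothesis, at the a.e. `t` where all the integrals involved converge.
  have hE : ∀ᵐ t, t ≤ T →
      (rlKernel (1 - α) ⋆ₗ P) t + (rlKernel 1 ⋆ₗ Gm) t =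
        (rlKernel (1 - α) ⋆ₗ P₀) t + (rlKernel 1 ⋆ₗ Gp) t := by
    filter_upwards [lconvolution_ae_ne_top (T := T) hα1' mP zP fP,
      lconvolution_ae_ne_top (T := T) hα1' mP₀ zP₀ fP₀] with t h1 h2 htT
    rcases lt_or_ge t 0 with ht | ht
    · rw [lconvolution_of_nonpos ht.le zP, lconvolution_of_nonpos ht.le zP₀,
        lconvolution_of_nonpos ht.le zGp, lconvolution_of_nonpos ht.le zGm]
    have hmem : t ∈ Icc 0 T := ⟨ht, htT⟩
    have h3 : (rlKernel 1 ⋆ₗ Gp) t ≠ ∞ := lconvolution_ne_top le_rfl zGp fGp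
    have h4 : (rlKernel 1 ⋆ₗ Gm) t ≠ ∞ := lconvolution_ne_top le_rfl zGm fGm
    have e1 := fracInt_sub_eq hα1' hφint hφ0 hcint (fun _ _ => hφ₀) hmem (h1 htT) (h2 htT)
    have e2 := fracInt_sub_eq one_pos hgp (fun _ _ => le_max_right _ _) hgm
      (fun _ _ => le_max_right _ _) hmem h3 h4
    have e3 : (fun s => max (g s) 0 - max (-g s) 0) = g := by
      ext s
      simp
    rw [e3, fracInt_one, ← hcaputo t hmem, e1] at e2
    rw [← ENNReal.toReal_eq_toReal_iff' (by simp [h1 htT, h4]) (by simp [h2 htT, h3]),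
      ENNReal.toReal_add (h1 htT) h4, ENNReal.toReal_add (h2 htT) h3]
    linarith
  have swap : ∀ {G : ℝ → ℝ≥0∞}, AEMeasurable G →
      rlKernel α ⋆ₗ (rlKernel 1 ⋆ₗ G) = rlKernel 1 ⋆ₗ (rlKernel α ⋆ₗ G) := fun hG => by
    rw [rlKernel_lconvolution_lconvolution hα0 one_pos hG,
      rlKernel_lconvolution_lconvolution one_pos hα0 hG, add_comm]
  have fold : ∀ {G : ℝ → ℝ≥0∞}, AEMeasurable G →
      rlKernel α ⋆ₗ (rlKernel (1 - α) ⋆ₗ G) = rlKernel 1 ⋆ₗ G := fun hG => by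
    rw [rlKernel_lconvolution_lconvolution hα0 hα1' hG, add_sub_cancel]
  have mc : ∀ {a : ℝ} {G : ℝ → ℝ≥0∞}, AEMeasurable G → AEMeasurable (rlKernel a ⋆ₗ G) :=
    fun hG => aemeasurable_lconvolution (measurable_rlKernel _).aemeasurable hG
  refine ae_eq_of_lconvolution_one_eq (F := fun t => P t + (rlKernel α ⋆ₗ Gm) t)
    (G := fun t => P₀ t + (rlKernel α ⋆ₗ Gp) t) (mP.add (mc mGm)) (mP₀.add (mc mGp)) ?_ ?_
  · intro t ht
    rw [lconvolution_add_right mP, lconvolution_add_right mP₀, ← swap mGm, ← swap mGp, ← fold mP,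
      ← fold mP₀, ← lconvolution_add_right (mc mP), ← lconvolution_add_right (mc mP₀)]
    refine le_antisymm (lconvolution_mono ht ?_) (lconvolution_mono ht ?_)
    · filter_upwards [hE] with s hs hsT using (hs hsT).le
    · filter_upwards [hE] with s hs hsT using (hs hsT).ge
  · rw [lconvolution_add_right mP, rlKernel_lconvolution_lconvolution one_pos hα0 mGm]
    exact ENNReal.add_ne_top.2 ⟨lconvolution_ne_top le_rfl zP fP,
      lconvolution_ne_top (by linarith) zGm fGm⟩

/-- Iteration of the Volterra inequality `P ≤ A + c K_α ⋆ P` for nondecreasing `A`; the powers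
`K_{kα} ⋆ A` are bounded by `A(t) (K_{kα} ⋆ K_1)(t) = A(t) K_{kα+1}(t)`. -/
lemma volterra_iterate {α T : ℝ} (hα0 : 0 < α) {c : ℝ≥0∞} (hc : c ≠ ∞) {P A : ℝ → ℝ≥0∞}
    (mP : AEMeasurable P) (mA : AEMeasurable A) (zP : ∀ s < 0, P s = 0)
    (zA : ∀ s < 0, A s = 0) (hA : MonotoneOn A (Iic T))
    (h : ∀ᵐ t, t ≤ T → P t ≤ A t + c * (rlKernel α ⋆ₗ P) t) (n : ℕ) :
    ∀ᵐ t, t ≤ T → P t ≤ A t * ∑ k ∈ Finset.range (n + 1), c ^ k * rlKernel (α * k + 1) t +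
      c ^ (n + 1) * (rlKernel ((n + 1 : ℕ) * α) ⋆ₗ P) t := by
  induction n with
  | zero =>
    filter_upwards [h, Measure.ae_ne volume 0] with t ht h0 htT
    rcases lt_or_ge t 0 with hlt | hge
    · simp [zP t hlt]
    · simpa [rlKernel_one_of_pos (lt_of_le_of_ne hge h0.symm)] using ht htT
  | succ n ih =>
    filter_upwards [ih] with t ht htT
    refine (ht htT).trans ?_
    rw [Finset.sum_range_succ _ (n + 1), mul_add, add_assoc]
    gcongr
    have hb : 0 < ((n + 1 : ℕ) : ℝ) * α := by positivity
    set b := ((n + 1 : ℕ) : ℝ) * α with hbdef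
    have s1 := lconvolution_mono (a := b) htT h
    rw [lconvolution_add_right mA, lconvolution_const_mul hc,
      rlKernel_lconvolution_lconvolution hb hα0 mP] at s1
    have s2 : (rlKernel b ⋆ₗ A) t ≤ A t * rlKernel (b + 1) t := by
      -- `lconvolution_const_mul` needs a finite constant; if `A t = ∞` the bound is trivial for `t > 0`.
      by_cases hAt : A t = ∞
      · rcases le_or_gt t 0 with h0 | h0
        · simp [lconvolution_of_nonpos h0 zA]
        · rw [hAt, rlKernel_of_pos h0, ENNReal.top_mul]
          · simp
          · have := Real.Gamma_pos_of_pos (show 0 < b + 1 by linarith)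
            simp only [ne_eq, ENNReal.ofReal_eq_zero, not_le]
            positivity
      rw [← rlKernel_lconvolution hb one_pos, ← lconvolution_const_mul hAt]
      refine lconvolution_mono le_rfl ?_
      filter_upwards [Measure.ae_ne volume 0] with s hs hst
      rcases lt_or_ge s 0 with hlt | hge
      · simp [zA s hlt]
      · rw [rlKernel_one_of_pos (lt_of_le_of_ne hge hs.symm), mul_one]
        exact hA (hst.trans htT) htT hst
    calc c ^ (n + 1) * (rlKernel b ⋆ₗ P) t
        ≤ c ^ (n + 1) * (A t * rlKernel (b + 1) t + c * (rlKernel (b + α) ⋆ₗ P) t) := by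
          gcongr
          exact s1.trans (by gcongr)
      _ = _ := by
          rw [show α * ((n + 1 : ℕ) : ℝ) + 1 = b + 1 by rw [hbdef]; ring,
            show ((n + 1 + 1 : ℕ) : ℝ) * α = b + α by rw [hbdef]; push_cast; ring]
          ring

lemma monotoneOn_zeroExt {T : ℝ} {f : ℝ → ℝ} (hf : MonotoneOn f (Icc 0 T)) :
    MonotoneOn (zeroExt T f) (Iic T) := by
  intro s hs t ht hst
  rcases lt_or_ge s 0 with h | h
  · simp [zeroExt_of_neg h]
  · have hs' : s ∈ Icc 0 T := ⟨h, hs⟩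
    have ht' : t ∈ Icc 0 T := ⟨h.trans hst, ht⟩
    rw [zeroExt_of_mem hs', zeroExt_of_mem ht']
    exact ENNReal.ofReal_le_ofReal (hf hs' ht' hst)

/-- **Differential Grönwall inequality for the Caputo fractional derivative.**
If `φ ≥ 0` is integrable, `ζ ≥ 0` is nondecreasing and integrable, `g` is the Caputo
fractional derivative of `φ` of order `α` (i.e. `I^{1−α}(φ − φ(0)) = ∫₀ᵗ g`), and
`g ≤ cφ + ζ` a.e., then `φ(t) ≤ (I^α ζ(t) + φ(0)) E_α(c t^α)` a.e. on `[0,T]`. -/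
theorem caputo_gronwall (α : ℝ) (hα0 : 0 < α) (hα1 : α < 1) (T : ℝ) (hT : 0 < T)
    (c : ℝ) (hc : 0 < c) (φ ζ g : ℝ → ℝ)
    (hφint : IntegrableOn φ (Set.Icc 0 T))
    (hφ0 : ∀ t ∈ Set.Icc (0 : ℝ) T, 0 ≤ φ t)
    (hζint : IntegrableOn ζ (Set.Icc 0 T))
    (hζ0 : ∀ t ∈ Set.Icc (0 : ℝ) T, 0 ≤ ζ t)
    (hζmono : MonotoneOn ζ (Set.Icc 0 T))
    (hgint : IntegrableOn g (Set.Icc 0 T))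
    (hcaputo : ∀ t ∈ Set.Icc (0 : ℝ) T,
      fracInt (1 - α) (fun s => φ s - φ 0) t = ∫ s in (0 : ℝ)..t, g s)
    (hineq : ∀ᵐ t ∂(volume.restrict (Set.Icc (0 : ℝ) T)), g t ≤ c * φ t + ζ t) :
    ∀ᵐ t ∂(volume.restrict (Set.Icc (0 : ℝ) T)),
      φ t ≤ (fracInt α ζ t + φ 0) * mittagLeffler α (c * t ^ α) := by
  have hφ00 : 0 ≤ φ 0 := hφ0 0 ⟨le_rfl, hT.le⟩
  set P := zeroExt T φ with hP
  set P₀ := zeroExt T (fun _ => φ 0) with hP₀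
  set Z := zeroExt T ζ with hZ
  set Gp := zeroExt T (fun s => max (g s) 0) with hGp
  set Gm := zeroExt T (fun s => max (-g s) 0) with hGm
  set A : ℝ → ℝ≥0∞ := fun t => P₀ t + (rlKernel α ⋆ₗ Z) t with hA
  have hcint : IntegrableOn (fun _ : ℝ => φ 0) (Icc 0 T) := by simp
  have hgm : IntegrableOn (fun s => max (-g s) 0) (Icc 0 T) := hgint.neg_part
  have mP : AEMeasurable P := aemeasurable_zeroExt hφint
  have mP₀ : AEMeasurable P₀ := aemeasurable_zeroExt hcint
  have mZ : AEMeasurable Z := aemeasurable_zeroExt hζint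
  have mGm : AEMeasurable Gm := aemeasurable_zeroExt hgm
  have mA : AEMeasurable A :=
    mP₀.add (aemeasurable_lconvolution (measurable_rlKernel _).aemeasurable mZ)
  have fP := lintegral_zeroExt_ne_top hφint
  have zP : ∀ s < 0, P s = 0 := fun s hs => zeroExt_of_neg hs
  have zZ : ∀ s < 0, Z s = 0 := fun s hs => zeroExt_of_neg hs
  have zGm : ∀ s < 0, Gm s = 0 := fun s hs => zeroExt_of_neg hs
  have zA : ∀ s < 0, A s = 0 := fun s hs => by
    simp only [hA, lconvolution_of_nonpos hs.le zZ, hP₀, zeroExt_of_neg hs, add_zero]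
  have monoA : MonotoneOn A (Iic T) := by
    intro s hs t ht hst
    refine add_le_add (monotoneOn_zeroExt (fun _ _ _ _ _ => le_rfl) hs ht hst) ?_
    simp only [lconvolution_def]
    refine lintegral_mono fun y => ?_
    rcases le_or_gt y 0 with hy | hy
    · simp [rlKernel_of_nonpos hy]
    · simp only [mem_Iic] at hs ht
      gcongr
      exact monotoneOn_zeroExt hζmono (show -y + s ≤ T by linarith)
        (show -y + t ≤ T by linarith) (by linarith)
  have hGle : ∀ᵐ s, Gp s ≤ ENNReal.ofReal c * P s + (Z s + Gm s) := by
    rw [ae_restrict_iff' measurableSet_Icc] at hineq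
    filter_upwards [hineq] with s hs
    by_cases hm : s ∈ Icc 0 T
    · have h1 := hφ0 s hm
      have h2 := hζ0 s hm
      have h3 : 0 ≤ max (-g s) 0 := le_max_right _ _
      simp only [hGp, hP, hZ, hGm, zeroExt_of_mem hm]
      rw [← ENNReal.ofReal_mul hc.le, ← ENNReal.ofReal_add h2 h3,
        ← ENNReal.ofReal_add (by positivity) (by positivity)]
      refine ENNReal.ofReal_le_ofReal (max_le ?_ (by positivity))
      linarith [hs hm]
    · simp only [hGp, zeroExt, indicator_of_notMem hm, zero_le]
  have hvolterra : ∀ᵐ t, t ≤ T → P t ≤ A t + ENNReal.ofReal c * (rlKernel α ⋆ₗ P) t := by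
    filter_upwards [caputo_inversion hα0 hα1 hφ00 hφint hφ0 hgint hcaputo,
      lconvolution_ae_ne_top (T := T) hα0 mGm zGm (lintegral_zeroExt_ne_top hgm)]
      with t ht hfin htT
    have h1 : (rlKernel α ⋆ₗ Gp) t ≤ ENNReal.ofReal c * (rlKernel α ⋆ₗ P) t +
        ((rlKernel α ⋆ₗ Z) t + (rlKernel α ⋆ₗ Gm) t) := by
      rw [← lconvolution_add_right mZ, ← lconvolution_const_mul ENNReal.ofReal_ne_top,
        ← lconvolution_add_right (mP.const_mul _)]
      refine lconvolution_mono htT ?_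
      filter_upwards [hGle] with s hs _ using hs
    -- Cancel `(K_α ⋆ g⁻)(t)`, which is finite for a.e. `t`.
    refine (ENNReal.add_le_add_iff_right (hfin htT)).1 ?_
    rw [ht htT]
    calc P₀ t + (rlKernel α ⋆ₗ Gp) t
        ≤ P₀ t + (ENNReal.ofReal c * (rlKernel α ⋆ₗ P) t +
          ((rlKernel α ⋆ₗ Z) t + (rlKernel α ⋆ₗ Gm) t)) := by gcongr
      _ = _ := by simp only [hA]; ring
  have hiter := ae_all_iff.2
    (volterra_iterate hα0 ENNReal.ofReal_ne_top mP mA zP zA monoA hvolterra)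
  rw [ae_restrict_iff' measurableSet_Icc]
  filter_upwards [hiter, Measure.ae_ne volume 0,
    lconvolution_ae_ne_top (T := T) hα0 mZ zZ (lintegral_zeroExt_ne_top hζint)] with t ht ht0 hfin hm
  have htpos : 0 < t := lt_of_le_of_ne hm.1 ht0.symm
  have hx : 0 < c * t ^ α := by positivity
  have hterm : ∀ k : ℕ, 0 ≤ (c * t ^ α) ^ k / Real.Gamma (α * k + 1) := fun k => by
    have := Real.Gamma_pos_of_pos (show 0 < α * k + 1 by positivity)
    positivity
  have hI0 : 0 ≤ fracInt α ζ t := by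
    rw [fracInt_eq_toReal hα0 hζint hζ0 hm]
    exact ENNReal.toReal_nonneg
  have hAt : A t = ENNReal.ofReal (fracInt α ζ t + φ 0) := by
    rw [ENNReal.ofReal_add hI0 hφ00, fracInt_eq_toReal hα0 hζint hζ0 hm,
      ENNReal.ofReal_toReal (hfin hm.2), add_comm]
    simp only [hA, hP₀, zeroExt_of_mem hm, hZ]
  have hsum : ∀ n : ℕ, ∑ k ∈ Finset.range (n + 1),
      ENNReal.ofReal c ^ k * rlKernel (α * k + 1) t ≤
        ENNReal.ofReal (mittagLeffler α (c * t ^ α)) := fun n => by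
    have e : ∀ k : ℕ, ENNReal.ofReal c ^ k * rlKernel (α * k + 1) t =
        ENNReal.ofReal ((c * t ^ α) ^ k / Real.Gamma (α * k + 1)) := fun k => by
      rw [rlKernel_of_pos htpos, ← ENNReal.ofReal_pow hc.le, ← ENNReal.ofReal_mul (by positivity),
        add_sub_cancel_right, Real.rpow_mul htpos.le, Real.rpow_natCast, mul_pow, mul_div_assoc]
    simp only [e]
    rw [← ENNReal.ofReal_sum_of_nonneg fun k _ => hterm k]
    exact ENNReal.ofReal_le_ofReal
      ((summable_mittagLeffler hα0 hx).sum_le_tsum _ fun k _ => hterm k)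
  have hrem : Tendsto (fun n : ℕ => ENNReal.ofReal (c ^ (n + 1) *
      (T ^ ((n + 1 : ℕ) * α - 1) / Real.Gamma ((n + 1 : ℕ) * α))) * ∫⁻ s, P s) atTop (𝓝 0) := by
    have h1 := ENNReal.tendsto_ofReal
      ((tendsto_remainder hα0 hc hT).comp (tendsto_add_atTop_nat 1))
    simpa using ENNReal.Tendsto.mul_const h1 (Or.inr fP)
  have hbound : ∀ᶠ n : ℕ in atTop, P t ≤
      ENNReal.ofReal ((fracInt α ζ t + φ 0) * mittagLeffler α (c * t ^ α)) +
        ENNReal.ofReal (c ^ (n + 1) *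
          (T ^ ((n + 1 : ℕ) * α - 1) / Real.Gamma ((n + 1 : ℕ) * α))) * ∫⁻ s, P s := by
    have hev : ∀ᶠ n : ℕ in atTop, 1 ≤ ((n + 1 : ℕ) : ℝ) * α :=
      ((tendsto_natCast_atTop_atTop.atTop_mul_const hα0).comp
        (tendsto_add_atTop_nat 1)).eventually_ge_atTop 1
    filter_upwards [hev] with n hn
    refine (ht n hm.2).trans (add_le_add ?_ ?_)
    · rw [ENNReal.ofReal_mul (by positivity), hAt]
      gcongr
      exact hsum n
    · rw [ENNReal.ofReal_mul (by positivity), mul_assoc, ENNReal.ofReal_pow hc.le]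
      gcongr
      exact lconvolution_le hn hm.2 zP
  have hlim := ge_of_tendsto (hrem.const_add
    (ENNReal.ofReal ((fracInt α ζ t + φ 0) * mittagLeffler α (c * t ^ α)))) hbound
  rw [add_zero, hP, zeroExt_of_mem hm] at hlim
  refine (ENNReal.ofReal_le_ofReal_iff ?_).1 hlim
  exact mul_nonneg (by positivity) (tsum_nonneg hterm)
end

section
/- Existence and uniqueness for fractional linear ODE systems (fractional Picard–Lindelöf): let α ∈ (0,1), T > 0, n ≥ 1, let y₀ ∈ ℂⁿ, and let g : [0,T] × ℂⁿ → ℂⁿ be continuous and globally Lipschitz in its second variable, uniformly in t. Then there exists a unique continuous function y : [0,T] → ℂⁿ with y(0) = y₀ satisfying the Caputo fractional initial value problem d^α y/dt^α = g(t, y(t)); equivalently, there is a unique continuous y : [0,T] → ℂⁿ such that I^{1−α}(y − y₀)(t) = ∫₀ᵗ g(s, y(s)) ds for every t ∈ [0,T]. -/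
/-!
The Caputo problem is equivalent to a weakly singular Volterra equation, which is solved by the
contraction principle.

Fubini on a triangle together with Euler's Beta integral gives `I^α I^(1-α) = I^(1-α) I^α = I^1`
on continuous functions (`FracPL.fracIntV_fracIntV`). Hence, for continuous `u` and `h`,
`I^(1-α) u = I^1 h` holds exactly when `u = I^α h`: one direction applies `I^(1-α)` to `u = I^α h`;
the other applies `I^α` to `I^(1-α) u = I^1 h = I^(1-α) I^α h`, giving `I^1 u = I^1 I^α h`, and
differentiates (`FracPL.caputo_iff_volterra`). With `u = y - y₀` and `h = g(·, y)` the problem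
becomes `y = y₀ + I^α g(·, y)`.

Since `∫₀^∞ x^(α-1) e^(-lam x) dx = Γ(α) lam^(-α)`, the right-hand side is Lipschitz with constant
`L lam^(-α)` for the weighted norm `sup_t e^(-lam t) ‖y t‖` (`FracPL.norm_fracIntV_sub_le`). For
`lam` large it is a contraction on the continuous functions on `[0, T]`, so it has exactly one
fixed point (`FracPL.volterra_existsUnique`).
-/

open MeasureTheory

/-- The vector-valued Riemann–Liouville fractional integral
`I^α ψ (t) = (1/Γ(α)) ∫₀ᵗ (t−τ)^{α−1} ψ(τ) dτ` (a Bochner integral). -/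
noncomputable def fracIntV (α : ℝ) {E : Type*} [NormedAddCommGroup E]
    [NormedSpace ℝ E] (ψ : ℝ → E) (t : ℝ) : E :=
  (1 / Real.Gamma α) • ∫ τ in (0 : ℝ)..t, ((t - τ) ^ (α - 1)) • ψ τ

open Set Filter Topology

namespace FracPL

section General

variable {E : Type*} [NormedAddCommGroup E] [NormedSpace ℝ E]

/-! ### The Riemann–Liouville integral and its semigroup law -/

lemma intervalIntegrable_kernel {α : ℝ} (hα : 0 < α) (t a b : ℝ) :
    IntervalIntegrable (fun τ : ℝ => (t - τ) ^ (α - 1)) volume a b := by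
  have h := (intervalIntegral.intervalIntegrable_rpow' (a := t - a) (b := t - b)
    (r := α - 1) (by linarith)).comp_sub_left t
  simpa using h

lemma fracIntV_congr {α t : ℝ} (ht : 0 ≤ t) {φ ψ : ℝ → E} (h : ∀ s ∈ Icc 0 t, φ s = ψ s) :
    fracIntV α φ t = fracIntV α ψ t := by
  unfold fracIntV
  congr 1
  refine intervalIntegral.integral_congr fun τ hτ => ?_
  rw [uIcc_of_le ht] at hτ
  simp only [h τ hτ]

/-- Rescaling `τ = t r` moves the parameter `t` out of the singular kernel. -/
lemma fracIntV_eq_scaled {α t : ℝ} (hα : 0 < α) (ht : 0 ≤ t) (h : ℝ → E) :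
    fracIntV α h t =
      (1 / Real.Gamma α) • (t ^ α • ∫ r in (0 : ℝ)..1, (1 - r) ^ (α - 1) • h (t * r)) := by
  unfold fracIntV
  congr 1
  rcases ht.eq_or_lt with rfl | ht
  · simp [Real.zero_rpow hα.ne']
  have h1 := intervalIntegral.smul_integral_comp_mul_left (a := 0) (b := 1)
    (fun τ : ℝ => (t - τ) ^ (α - 1) • h τ) t
  simp only [mul_zero, mul_one] at h1
  have h2 : t ^ α = t * t ^ (α - 1) := by
    rw [Real.rpow_sub_one ht.ne']; field_simp
  rw [← h1, h2, mul_smul, ← intervalIntegral.integral_smul (t ^ (α - 1))]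
  congr 1
  refine intervalIntegral.integral_congr fun r hr => ?_
  rw [uIcc_of_le zero_le_one] at hr
  rw [smul_smul, ← Real.mul_rpow ht.le (by linarith [hr.2])]
  ring_nf

lemma continuousOn_fracIntV {α : ℝ} (hα : 0 < α) {h : ℝ → E} (hh : Continuous h) {M : ℝ}
    (hM : ∀ s, ‖h s‖ ≤ M) : ContinuousOn (fracIntV α h) (Ici 0) := by
  have hc : Continuous fun t : ℝ => ∫ r in (0 : ℝ)..1, (1 - r) ^ (α - 1) • h (t * r) := by
    refine intervalIntegral.continuous_of_dominated_interval
      (bound := fun r => (1 - r) ^ (α - 1) * M) ?_ ?_ ?_ ?_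
    · intro t
      have h1 : Measurable fun r : ℝ => (1 - r) ^ (α - 1) := by fun_prop
      exact (h1.aestronglyMeasurable.smul
        (by fun_prop : Continuous fun r : ℝ => h (t * r)).aestronglyMeasurable)
    · refine fun t => ae_of_all _ fun r hr => ?_
      rw [uIoc_of_le zero_le_one] at hr
      have : 0 ≤ (1 - r) ^ (α - 1) := Real.rpow_nonneg (by linarith [hr.2]) _
      rw [norm_smul, Real.norm_of_nonneg this]
      gcongr
      exact hM _
    · exact (intervalIntegrable_kernel hα 1 0 1).mul_const M
    · exact ae_of_all _ fun r _ => by fun_prop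
  refine ContinuousOn.congr ?_ fun t ht => fracIntV_eq_scaled hα ht h
  refine Continuous.continuousOn ?_
  exact ((Real.continuous_rpow_const hα.le).smul hc).const_smul _

/-- Euler's Beta integral over `[τ, t]` for exponents with `α + β = 1`; the value does not depend
on the interval. -/
lemma integral_beta {α β τ t : ℝ} (hα : 0 < α) (hβ : 0 < β) (hαβ : α + β = 1) (hτ : τ < t) :
    ∫ s in τ..t, (t - s) ^ (α - 1) * (s - τ) ^ (β - 1) = Real.Gamma α * Real.Gamma β := by
  have h1 := Complex.betaIntegral_scaled (β : ℂ) (α : ℂ) (sub_pos.2 hτ)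
  have h2 := Complex.Gamma_mul_Gamma_eq_betaIntegral (s := (β : ℂ)) (t := (α : ℂ))
    (by simpa using hβ) (by simpa using hα)
  have h3 : (β : ℂ) + α = 1 := by rw [← Complex.ofReal_add, add_comm, hαβ, Complex.ofReal_one]
  rw [h3, Complex.Gamma_one, one_mul] at h2
  rw [h3, sub_self, Complex.cpow_zero, one_mul, ← h2] at h1
  have h4 := intervalIntegral.integral_comp_sub_right (a := τ) (b := t)
    (fun x : ℝ => x ^ (β - 1) * ((t - τ) - x) ^ (α - 1)) τ
  have h5 : ∫ s in τ..t, (t - s) ^ (α - 1) * (s - τ) ^ (β - 1) =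
      ∫ x in (0 : ℝ)..(t - τ), x ^ (β - 1) * ((t - τ) - x) ^ (α - 1) := by
    rw [sub_self] at h4
    rw [← h4]
    refine intervalIntegral.integral_congr fun s _ => ?_
    rw [mul_comm]
    ring_nf
  rw [h5]
  apply Complex.ofReal_injective
  rw [← intervalIntegral.integral_ofReal, Complex.ofReal_mul, ← Complex.Gamma_ofReal,
    ← Complex.Gamma_ofReal, mul_comm, ← h1]
  refine intervalIntegral.integral_congr fun x hx => ?_
  rw [uIcc_of_le (sub_pos.2 hτ).le] at hx
  rw [Complex.ofReal_mul, Complex.ofReal_cpow hx.1, Complex.ofReal_cpow (by linarith [hx.2])]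
  push_cast
  rfl

/-- The semigroup law `I^α I^β = I^1` for `α + β = 1`: Fubini on the triangle
`0 < τ < s < t`, written as a convolution integrand on the whole plane. -/
lemma fracIntV_fracIntV [CompleteSpace E] {α β t : ℝ} (hα : 0 < α) (hβ : 0 < β) (hαβ : α + β = 1) (ht : 0 ≤ t)
    {h : ℝ → E} (hh : Continuous h) {M : ℝ} (hM : ∀ s, ‖h s‖ ≤ M) :
    fracIntV α (fracIntV β h) t = ∫ s in (0 : ℝ)..t, h s := by
  have hβ1 : β - 1 ≠ 0 := by linarith
  set A : ℝ → ℝ := indicator (Ioc 0 t) fun s => (t - s) ^ (α - 1) with hA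
  set K : ℝ → ℝ := indicator (Ioc 0 t) fun x => x ^ (β - 1) with hK
  set H : ℝ → E := indicator (Ioc 0 t) h with hH
  have hAi : Integrable A := by
    rw [hA, integrable_indicator_iff measurableSet_Ioc,
      ← intervalIntegrable_iff_integrableOn_Ioc_of_le ht]
    exact intervalIntegrable_kernel hα t 0 t
  have hKi : Integrable K := by
    rw [hK, integrable_indicator_iff measurableSet_Ioc,
      ← intervalIntegrable_iff_integrableOn_Ioc_of_le ht]
    exact intervalIntegral.intervalIntegrable_rpow' (by linarith)
  have hconv : Integrable (fun p : ℝ × ℝ => A p.2 * K (p.2 - p.1)) (volume.prod volume) := by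
    have := hAi.convolution_integrand (ContinuousLinearMap.mul ℝ ℝ) hKi.comp_neg
    simpa using this
  have hHm : StronglyMeasurable H := hh.stronglyMeasurable.indicator measurableSet_Ioc
  have hF : Integrable (Function.uncurry fun τ s : ℝ => (A s * K (s - τ)) • H τ)
      (volume.prod volume) := by
    refine Integrable.mono' (hconv.norm.mul_const M) ?_ ?_
    · exact hconv.aestronglyMeasurable.smul
        (hHm.comp_measurable measurable_fst).aestronglyMeasurable
    · refine ae_of_all _ fun p => ?_
      simp only [Function.uncurry]
      rw [norm_smul]
      gcongr
      exact (norm_indicator_le_norm_self _ _).trans (hM _)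
  have hswap := integral_integral_swap hF
  -- integrating in `s` first produces the Beta integral
  have hL : ∫ τ, ∫ s, (A s * K (s - τ)) • H τ =
      (Real.Gamma α * Real.Gamma β) • ∫ s in (0 : ℝ)..t, h s := by
    rw [intervalIntegral.integral_of_le ht, ← integral_indicator measurableSet_Ioc,
      ← integral_smul]
    refine integral_congr_ae ?_
    filter_upwards [compl_mem_ae_iff.2 (measure_singleton t)] with τ hτ
    by_cases hmem : τ ∈ Ioc 0 t
    · have hlt : τ < t := lt_of_le_of_ne hmem.2 hτ
      rw [integral_smul_const]
      congr 1
      rw [← integral_beta hα hβ hαβ hlt, intervalIntegral.integral_of_le hlt.le,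
        ← integral_indicator measurableSet_Ioc]
      congr 1
      ext s
      simp only [hA, hK, indicator_apply, mem_Ioc]
      have := hmem.1
      by_cases hs : τ < s ∧ s ≤ t
      · rw [if_pos ⟨by linarith, hs.2⟩, if_pos ⟨by linarith, by linarith⟩, if_pos hs]
      · rw [if_neg hs]
        by_cases h1 : s ≤ t
        · have : ¬ (0 < s - τ ∧ s - τ ≤ t) := fun h => hs ⟨by linarith, h1⟩
          rw [if_neg this, mul_zero]
        · rw [if_neg (fun h => h1 h.2), zero_mul]
    · simp [hH, indicator_of_notMem hmem]
  -- integrating in `τ` first produces the iterated fractional integral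
  have hR : ∫ s, ∫ τ, (A s * K (s - τ)) • H τ =
      ∫ s in (0 : ℝ)..t, (t - s) ^ (α - 1) • ∫ τ in (0 : ℝ)..s, (s - τ) ^ (β - 1) • h τ := by
    rw [intervalIntegral.integral_of_le ht, ← integral_indicator measurableSet_Ioc]
    congr 1
    ext s
    by_cases hs : s ∈ Ioc 0 t
    · rw [indicator_of_mem hs, intervalIntegral.integral_of_le hs.1.le,
        ← integral_indicator measurableSet_Ioc, ← integral_smul]
      congr 1
      ext τ
      rw [hA, indicator_of_mem hs, mul_smul]
      congr 1
      simp only [hK, hH, indicator_apply, mem_Ioc]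
      have := hs.1
      have := hs.2
      by_cases hτ : 0 < τ ∧ τ ≤ s
      · rw [if_pos hτ, if_pos (show 0 < τ ∧ τ ≤ t from ⟨hτ.1, by linarith⟩)]
        rcases hτ.2.eq_or_lt with rfl | h1
        · simp [Real.zero_rpow hβ1]
        · rw [if_pos ⟨by linarith, by linarith⟩]
      · rw [if_neg hτ]
        by_cases h0 : 0 < τ
        · rw [if_neg (fun h => hτ ⟨h0, by linarith [h.1]⟩), zero_smul]
        · rw [if_neg (fun h : 0 < τ ∧ τ ≤ t => h0 h.1), smul_zero]
    · simp [hA, indicator_of_notMem hs]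
  rw [hL, hR] at hswap
  have hαG := (Real.Gamma_pos_of_pos hα).ne'
  have hβG := (Real.Gamma_pos_of_pos hβ).ne'
  unfold fracIntV
  simp only [smul_comm _ (1 / Real.Gamma β)]
  rw [intervalIntegral.integral_smul, ← hswap, smul_smul, smul_smul]
  have : 1 / Real.Gamma α * (1 / Real.Gamma β * (Real.Gamma α * Real.Gamma β)) = 1 := by
    field_simp
  simp only [← mul_assoc] at this ⊢
  rw [this, one_smul]

/-! ### The weighted estimate -/

/-- Estimate in the exponentially weighted (Bielecki) norm: `I^α` gains the factor `lam ^ (-α)`,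
because `∫₀^∞ x^(α-1) e^(-lam x) dx = Γ(α) lam^(-α)`. -/
lemma norm_fracIntV_sub_le {α lam C t : ℝ} (hα : 0 < α) (hlam : 0 < lam) (hC : 0 ≤ C)
    (ht : 0 ≤ t) {φ ψ : ℝ → E} (hφ : Continuous φ) (hψ : Continuous ψ)
    (h : ∀ s ∈ Icc 0 t, ‖φ s - ψ s‖ ≤ C * Real.exp (lam * s)) :
    ‖fracIntV α φ t - fracIntV α ψ t‖ ≤ C * (1 / lam) ^ α * Real.exp (lam * t) := by
  have hG := Real.Gamma_pos_of_pos hα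
  have hk := intervalIntegrable_kernel hα t 0 t
  have hint : ∫ τ in (0 : ℝ)..t, (t - τ) ^ (α - 1) * Real.exp (lam * τ) ≤
      (1 / lam) ^ α * Real.Gamma α * Real.exp (lam * t) := by
    have h1 := intervalIntegral.integral_comp_sub_left (a := 0) (b := t)
      (fun x : ℝ => x ^ (α - 1) * Real.exp (-(lam * x)) * Real.exp (lam * t)) t
    rw [sub_self, sub_zero] at h1
    have h2 : ∫ τ in (0 : ℝ)..t, (t - τ) ^ (α - 1) * Real.exp (lam * τ) =
        ∫ τ in (0 : ℝ)..t,
          (t - τ) ^ (α - 1) * Real.exp (-(lam * (t - τ))) * Real.exp (lam * t) := by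
      refine intervalIntegral.integral_congr fun τ _ => ?_
      rw [mul_assoc, ← Real.exp_add]
      ring_nf
    rw [h2, h1, intervalIntegral.integral_mul_const, ← Real.integral_rpow_mul_exp_neg_mul_Ioi hα hlam,
      intervalIntegral.integral_of_le ht]
    refine mul_le_mul_of_nonneg_right (setIntegral_mono_set ?_ ?_ ?_) (Real.exp_pos _).le
    · have := integrableOn_rpow_mul_exp_neg_mul_rpow (p := 1) (s := α - 1) (b := lam)
        (by linarith) one_pos hlam
      simpa using this
    · filter_upwards [ae_restrict_mem measurableSet_Ioi] with x hx
      have : (0 : ℝ) < x := hx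
      simp only [Pi.zero_apply]
      positivity
    · exact Ioc_subset_Ioi_self.eventuallyLE
  have hsub : fracIntV α φ t - fracIntV α ψ t =
      (1 / Real.Gamma α) • ∫ τ in (0 : ℝ)..t, (t - τ) ^ (α - 1) • (φ τ - ψ τ) := by
    unfold fracIntV
    rw [← smul_sub, ← intervalIntegral.integral_sub (hk.smul_continuousOn hφ.continuousOn)
      (hk.smul_continuousOn hψ.continuousOn)]
    simp only [smul_sub]
  have hnorm : ‖∫ τ in (0 : ℝ)..t, (t - τ) ^ (α - 1) • (φ τ - ψ τ)‖ ≤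
      ∫ τ in (0 : ℝ)..t, C * ((t - τ) ^ (α - 1) * Real.exp (lam * τ)) := by
    refine intervalIntegral.norm_integral_le_of_norm_le ht ?_ ?_
    · refine ae_of_all _ fun τ hτ => ?_
      have h0 : 0 ≤ (t - τ) ^ (α - 1) := Real.rpow_nonneg (by linarith [hτ.2]) _
      rw [norm_smul, Real.norm_of_nonneg h0]
      calc _ ≤ (t - τ) ^ (α - 1) * (C * Real.exp (lam * τ)) := by
            gcongr
            exact h τ ⟨hτ.1.le, hτ.2⟩
        _ = _ := by ring
    · exact (hk.mul_continuousOn (by fun_prop)).const_mul C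
  rw [intervalIntegral.integral_const_mul] at hnorm
  rw [hsub, norm_smul, Real.norm_of_nonneg (by positivity)]
  calc _ ≤ 1 / Real.Gamma α * (C * ((1 / lam) ^ α * Real.Gamma α * Real.exp (lam * t))) := by
        gcongr
        exact hnorm.trans (by gcongr)
    _ = _ := by field_simp

/-! ### Equivalence with the Volterra equation -/

/-- A function continuous on `[0, T]` agrees there with a bounded continuous function on `ℝ`. -/
lemma exists_extension {F : Type*} [NormedAddCommGroup F] {T : ℝ} (hT : 0 ≤ T)
    {f : ℝ → F} (hf : ContinuousOn f (Icc 0 T)) :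
    ∃ φ : ℝ → F, Continuous φ ∧ (∃ M, ∀ s, ‖φ s‖ ≤ M) ∧ ∀ s ∈ Icc 0 T, φ s = f s := by
  have hc : Continuous ((Icc 0 T).domRestrict f) := hf.domRestrict
  refine ⟨IccExtend hT ((Icc 0 T).domRestrict f), hc.Icc_extend', ?_, fun s hs => ?_⟩
  · obtain ⟨M, hM⟩ := isCompact_Icc.exists_bound_of_continuousOn hf
    exact ⟨M, fun s => hM _ (projIcc 0 T hT s).2⟩
  · rw [IccExtend_of_mem hT _ hs]
    rfl

/-- On `[0, T]`, continuous functions are determined by their primitives. -/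
lemma eq_of_integral_eq [CompleteSpace E] {T : ℝ} (hT : 0 < T) {F G : ℝ → E} (hF : Continuous F)
    (hG : Continuous G)
    (h : ∀ t ∈ Icc 0 T, ∫ s in (0 : ℝ)..t, F s = ∫ s in (0 : ℝ)..t, G s) :
    ∀ t ∈ Icc 0 T, F t = G t := by
  have hIoo : EqOn F G (Ioo 0 T) := by
    intro t ht
    have h1 := intervalIntegral.integral_hasDerivAt_right (hF.intervalIntegrable 0 t)
      (hF.stronglyMeasurableAtFilter _ _) hF.continuousAt
    have h2 := intervalIntegral.integral_hasDerivAt_right (hG.intervalIntegrable 0 t)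
      (hG.stronglyMeasurableAtFilter _ _) hG.continuousAt
    refine h1.unique (h2.congr_of_eventuallyEq ?_)
    filter_upwards [Icc_mem_nhds ht.1 ht.2] with s hs using h s hs
  have := hIoo.closure hF hG
  rwa [closure_Ioo hT.ne] at this

/-- The Caputo equation in integrated form is equivalent to the Volterra equation `u = I^α h`. -/
lemma caputo_iff_volterra [CompleteSpace E] {α T : ℝ} (hα0 : 0 < α) (hα1 : α < 1) (hT : 0 < T)
    {u h : ℝ → E} (hu : ContinuousOn u (Icc 0 T)) (hh : ContinuousOn h (Icc 0 T)) :
    (∀ t ∈ Icc 0 T, fracIntV (1 - α) u t = ∫ s in (0 : ℝ)..t, h s) ↔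
      ∀ t ∈ Icc 0 T, u t = fracIntV α h t := by
  have hβ : 0 < 1 - α := by linarith
  obtain ⟨H, hHc, ⟨M, hM⟩, hHh⟩ := exists_extension hT.le hh
  have hsub : ∀ {t : ℝ}, t ∈ Icc 0 T → ∀ s ∈ Icc 0 t, s ∈ Icc 0 T :=
    fun ht s hs => ⟨hs.1, hs.2.trans ht.2⟩
  have hIh : ∀ t ∈ Icc 0 T, fracIntV α h t = fracIntV α H t := fun t ht =>
    fracIntV_congr ht.1 fun s hs => (hHh s (hsub ht s hs)).symm
  have hprim : ∀ t ∈ Icc 0 T, ∫ s in (0 : ℝ)..t, h s = ∫ s in (0 : ℝ)..t, H s := by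
    intro t ht
    refine intervalIntegral.integral_congr fun s hs => ?_
    rw [uIcc_of_le ht.1] at hs
    exact (hHh s (hsub ht s hs)).symm
  have hsemi : ∀ t ∈ Icc 0 T, fracIntV (1 - α) (fracIntV α H) t = ∫ s in (0 : ℝ)..t, h s :=
    fun t ht => by
      rw [hprim t ht, fracIntV_fracIntV hβ hα0 (by ring) ht.1 hHc hM]
  constructor
  · intro hcap
    obtain ⟨U, hUc, ⟨M', hM'⟩, hUu⟩ := exists_extension hT.le hu
    obtain ⟨V, hVc, ⟨M'', hM''⟩, hV⟩ := exists_extension hT.le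
      ((continuousOn_fracIntV hα0 hHc hM).mono (fun s (hs : s ∈ Icc 0 T) => hs.1))
    -- `I^1 u = I^α I^(1-α) u = I^α I^1 h = I^α I^(1-α) I^α h = I^1 I^α h`
    have hprimUV : ∀ t ∈ Icc 0 T, ∫ s in (0 : ℝ)..t, U s = ∫ s in (0 : ℝ)..t, V s := by
      intro t ht
      rw [← fracIntV_fracIntV hα0 hβ (by ring) ht.1 hUc hM',
        ← fracIntV_fracIntV hα0 hβ (by ring) ht.1 hVc hM'']
      refine fracIntV_congr ht.1 fun s hs => ?_
      have hs' := hsub ht s hs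
      rw [fracIntV_congr hs.1 fun r hr => hUu r (hsub hs' r hr),
        fracIntV_congr hs.1 fun r hr => hV r (hsub hs' r hr), hcap s hs', hsemi s hs']
    intro t ht
    rw [hIh t ht, ← hV t ht, ← hUu t ht]
    exact eq_of_integral_eq hT hUc hVc hprimUV t ht
  · intro hvol t ht
    rw [← hsemi t ht]
    refine fracIntV_congr ht.1 fun s hs => ?_
    rw [hvol s (hsub ht s hs), hIh s (hsub ht s hs)]

/-! ### Solving the Volterra equation -/

/-- Unique solvability of the Volterra equation `y = y₀ + I^α g(·, y)`, by the contraction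
principle applied to the unknown `v(t) = e^(-lam t) y(t)` with `lam` large. -/
lemma volterra_existsUnique [CompleteSpace E] {α T : ℝ} (hα : 0 < α) (hT : 0 < T) (y₀ : E)
    {g : ℝ → E → E}
    (hg : ContinuousOn (fun p : ℝ × E => g p.1 p.2) (Icc 0 T ×ˢ univ)) {L : ℝ}
    (hgL : ∀ t ∈ Icc (0 : ℝ) T, ∀ x y : E, ‖g t x - g t y‖ ≤ L * ‖x - y‖) :
    ∃ y : ℝ → E,
      (ContinuousOn y (Icc 0 T) ∧
        ∀ t ∈ Icc (0 : ℝ) T, y t = y₀ + fracIntV α (fun s => g s (y s)) t) ∧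
      ∀ z : ℝ → E,
        (ContinuousOn z (Icc 0 T) ∧
          ∀ t ∈ Icc (0 : ℝ) T, z t = y₀ + fracIntV α (fun s => g s (z s)) t) →
        ∀ t ∈ Icc (0 : ℝ) T, z t = y t := by
  -- `lam` with `max L 0 * lam ^ (-α) ≤ 1 / 2`
  obtain ⟨lam, hlam, hlamL⟩ : ∃ lam : ℝ, 0 < lam ∧ max L 0 * (1 / lam) ^ α ≤ 1 / 2 := by
    have h1 : Tendsto (fun x : ℝ => max L 0 * (1 / x) ^ α) atTop (𝓝 (max L 0 * 0)) := by
      refine Tendsto.const_mul _ ?_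
      refine (tendsto_rpow_neg_atTop hα).congr' ?_
      filter_upwards [eventually_gt_atTop 0] with x hx
      rw [one_div, Real.inv_rpow hx.le, Real.rpow_neg hx.le]
    rw [mul_zero] at h1
    have h2 := h1.eventually (ge_mem_nhds (show (0 : ℝ) < 1 / 2 by norm_num))
    exact ((eventually_gt_atTop 0).and h2).exists
  -- the right-hand side `s ↦ g(s, e^(lam s) v(s))`, extended to `ℝ` by constants
  let N : C(Icc 0 T, E) → ℝ → E := fun v =>
    IccExtend hT.le fun x : Icc 0 T => g x (Real.exp (lam * x) • v x)
  have hNc' : ∀ v : C(Icc 0 T, E),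
      Continuous fun x : Icc 0 T => g x (Real.exp (lam * x) • v x) := fun v =>
    hg.comp_continuous (f := fun x : Icc 0 T => ((x : ℝ), Real.exp (lam * x) • v x))
      (by fun_prop) fun x => ⟨x.2, mem_univ _⟩
  have hNc : ∀ v, Continuous (N v) := fun v => (hNc' v).Icc_extend'
  have hNb : ∀ v, ∃ M, ∀ s, ‖N v s‖ ≤ M := fun v => by
    obtain ⟨M, hM⟩ := isCompact_univ.exists_bound_of_continuousOn (hNc' v).continuousOn
    exact ⟨M, fun s => hM _ (mem_univ _)⟩
  have hNe : ∀ (v : C(Icc 0 T, E)) (s : ℝ) (hs : s ∈ Icc 0 T),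
      N v s = g s (Real.exp (lam * s) • v ⟨s, hs⟩) := fun v s hs =>
    IccExtend_of_mem hT.le (fun x : Icc 0 T => g x (Real.exp (lam * x) • v x)) hs
  have hSc : ∀ v, Continuous fun t : Icc 0 T =>
      Real.exp (-(lam * t)) • (y₀ + fracIntV α (N v) t) := fun v => by
    obtain ⟨M, hM⟩ := hNb v
    have h1 : Continuous fun t : Icc 0 T => fracIntV α (N v) t :=
      (continuousOn_fracIntV hα (hNc v) hM).comp_continuous continuous_subtype_val
        fun t => t.2.1
    fun_prop
  let S : C(Icc 0 T, E) → C(Icc 0 T, E) := fun v => ⟨_, hSc v⟩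
  have hSa : ∀ v (t : Icc 0 T),
      S v t = Real.exp (-(lam * t)) • (y₀ + fracIntV α (N v) t) := fun _ _ => rfl
  have hcontr : ContractingWith (1 / 2) S := by
    refine ⟨by norm_num, LipschitzWith.of_dist_le_mul fun v w => ?_⟩
    rw [ContinuousMap.dist_le (by positivity)]
    intro t
    have hbound : ∀ s ∈ Icc 0 (t : ℝ), ‖N v s - N w s‖ ≤
        (max L 0 * dist v w) * Real.exp (lam * s) := by
      intro s hs
      have hs' : s ∈ Icc 0 T := ⟨hs.1, hs.2.trans t.2.2⟩
      rw [hNe v s hs', hNe w s hs']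
      refine (hgL s hs' _ _).trans ?_
      rw [← smul_sub, norm_smul, Real.norm_of_nonneg (Real.exp_pos _).le, ← dist_eq_norm]
      calc _ ≤ max L 0 * (Real.exp (lam * s) * dist v w) := by
            gcongr
            · exact le_max_left _ _
            · exact ContinuousMap.dist_apply_le_dist _
        _ = _ := by ring
    have h1 := norm_fracIntV_sub_le hα hlam (by positivity) t.2.1 (hNc v) (hNc w) hbound
    rw [dist_eq_norm, hSa, hSa, ← smul_sub, add_sub_add_left_eq_sub, norm_smul,
      Real.norm_of_nonneg (Real.exp_pos _).le]
    calc _ ≤ Real.exp (-(lam * t)) *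
          (max L 0 * dist v w * (1 / lam) ^ α * Real.exp (lam * t)) := by gcongr
      _ = (max L 0 * (1 / lam) ^ α) * dist v w * (Real.exp (-(lam * t)) * Real.exp (lam * t)) := by
          ring
      _ = (max L 0 * (1 / lam) ^ α) * dist v w := by
          rw [← Real.exp_add, neg_add_cancel, Real.exp_zero, mul_one]
      _ ≤ 1 / 2 * dist v w := by gcongr
      _ = _ := by norm_num
  have hee : ∀ (s : ℝ) (x : E), Real.exp (lam * s) • Real.exp (-(lam * s)) • x = x := by
    intro s x
    rw [smul_smul, ← Real.exp_add, add_neg_cancel, Real.exp_zero, one_smul]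
  -- a continuous solution `z` gives the fixed point `e^(-lam t) z(t)` of `S`
  have huniq : ∀ z : ℝ → E, (ContinuousOn z (Icc 0 T) ∧
      ∀ t ∈ Icc (0 : ℝ) T, z t = y₀ + fracIntV α (fun s => g s (z s)) t) →
      ∀ t (ht : t ∈ Icc (0 : ℝ) T),
        z t = Real.exp (lam * t) • (hcontr.fixedPoint S) ⟨t, ht⟩ := by
    rintro z ⟨hzc, hz⟩ t ht
    have hzc' : Continuous fun x : Icc 0 T => Real.exp (-(lam * x)) • z x := by
      have : Continuous fun x : Icc 0 T => z x := hzc.domRestrict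
      exact Continuous.smul (by fun_prop) this
    let v : C(Icc 0 T, E) := ⟨_, hzc'⟩
    have hva : ∀ x : Icc 0 T, v x = Real.exp (-(lam * x)) • z x := fun _ => rfl
    have hv : Function.IsFixedPt S v := by
      ext x
      rw [hSa, hva, hz x x.2]
      congr 2
      refine fracIntV_congr x.2.1 fun s hs => ?_
      rw [hNe v s ⟨hs.1, hs.2.trans x.2.2⟩, hva, hee]
    rw [← hcontr.fixedPoint_unique hv, hva, hee]
  set v := hcontr.fixedPoint S with hv
  have hfix : S v = v := hcontr.fixedPoint_isFixedPt
  refine ⟨fun t => Real.exp (lam * t) • IccExtend hT.le v t, ⟨?_, ?_⟩, ?_⟩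
  · have : Continuous (IccExtend hT.le v) := v.continuous.Icc_extend'
    fun_prop
  · intro t ht
    simp only
    rw [IccExtend_of_mem hT.le v ht, ← hfix, hSa, hee]
    congr 1
    refine fracIntV_congr ht.1 fun s hs => ?_
    have hs' : s ∈ Icc 0 T := ⟨hs.1, hs.2.trans ht.2⟩
    rw [hNe v s hs', hfix, IccExtend_of_mem hT.le v hs']
  · intro z hz t ht
    simp only
    rw [huniq z hz t ht, IccExtend_of_mem hT.le v ht]

end General

end FracPL

/-- **Existence and uniqueness for fractional linear ODE systems
(fractional Picard–Lindelöf).**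
For `α ∈ (0,1)`, `y₀ ∈ ℂⁿ` and `g : [0,T] × ℂⁿ → ℂⁿ` continuous and globally
Lipschitz in the second variable, there is a unique continuous `y : [0,T] → ℂⁿ` with
`y(0) = y₀` solving the Caputo problem `d^α y/dt^α = g(t, y(t))`, i.e. such that
`I^{1−α}(y − y₀)(t) = ∫₀ᵗ g(s, y(s)) ds` for all `t ∈ [0,T]`. -/
theorem fractional_picard_lindelof (α T : ℝ) (hα0 : 0 < α) (hα1 : α < 1) (hT : 0 < T)
    (n : ℕ) (hn : 1 ≤ n) (y₀ : EuclideanSpace ℂ (Fin n))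
    (g : ℝ → EuclideanSpace ℂ (Fin n) → EuclideanSpace ℂ (Fin n))
    (hgcont : ContinuousOn (fun p : ℝ × EuclideanSpace ℂ (Fin n) => g p.1 p.2)
      (Set.Icc 0 T ×ˢ Set.univ))
    (L : ℝ)
    (hgLip : ∀ t ∈ Set.Icc (0 : ℝ) T, ∀ x y : EuclideanSpace ℂ (Fin n),
      ‖g t x - g t y‖ ≤ L * ‖x - y‖) :
    ∃ y : ℝ → EuclideanSpace ℂ (Fin n),
      (ContinuousOn y (Set.Icc 0 T) ∧ y 0 = y₀ ∧
        ∀ t ∈ Set.Icc (0 : ℝ) T,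
          fracIntV (1 - α) (fun s => y s - y₀) t = ∫ s in (0 : ℝ)..t, g s (y s)) ∧
      ∀ z : ℝ → EuclideanSpace ℂ (Fin n),
        (ContinuousOn z (Set.Icc 0 T) ∧ z 0 = y₀ ∧
          ∀ t ∈ Set.Icc (0 : ℝ) T,
            fracIntV (1 - α) (fun s => z s - y₀) t = ∫ s in (0 : ℝ)..t, g s (z s)) →
        ∀ t ∈ Set.Icc (0 : ℝ) T, z t = y t := by
  have hcg : ∀ z : ℝ → EuclideanSpace ℂ (Fin n), ContinuousOn z (Icc 0 T) →
      ContinuousOn (fun s => g s (z s)) (Icc 0 T) := fun z hz =>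
    hgcont.comp (f := fun s : ℝ => (s, z s)) (continuousOn_id.prodMk hz)
      fun s hs => ⟨hs, mem_univ _⟩
  have hiff : ∀ z : ℝ → EuclideanSpace ℂ (Fin n), ContinuousOn z (Icc 0 T) →
      ((∀ t ∈ Icc (0 : ℝ) T,
          fracIntV (1 - α) (fun s => z s - y₀) t = ∫ s in (0 : ℝ)..t, g s (z s)) ↔
        ∀ t ∈ Icc (0 : ℝ) T, z t = y₀ + fracIntV α (fun s => g s (z s)) t) := fun z hz => by
    rw [FracPL.caputo_iff_volterra hα0 hα1 hT (u := fun s => z s - y₀)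
      (hz.sub continuousOn_const) (hcg z hz)]
    simp only [sub_eq_iff_eq_add']
  obtain ⟨y, ⟨hyc, hy⟩, hyu⟩ := FracPL.volterra_existsUnique hα0 hT y₀ hgcont hgLip
  refine ⟨y, ⟨hyc, ?_, (hiff y hyc).2 hy⟩, ?_⟩
  · rw [hy 0 ⟨le_rfl, hT.le⟩]
    simp [fracIntV]
  · rintro z ⟨hzc, -, hz⟩
    exact hyu z ⟨hzc, (hiff z hzc).1 hz⟩
end

section
/- Vanishing Caputo derivative implies constancy (conservation of mass): let α ∈ (0,1), T > 0, let φ : [0,T] → ℂ be integrable and let c ∈ ℂ. If I^{1−α}(φ − c)(t) = 0 for every t ∈ [0,T] (i.e. the Caputo fractional derivative of φ of order α vanishes, with initial value c), then φ(t) = c for almost every t ∈ [0,T]. In particular, the zeroth Fourier mode t ↦ û(0,t) of a weak solution of the fractional Fokker–Planck equation with mean-zero source, which satisfies d^α û(0,·)/dt^α = 0, is constant in time, so the total mass ∫_{𝕋^d} u(x,t) dx is conserved. -/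
/-!
Put `f = φ - c` on `(0, T]`, extended by zero. The hypothesis says that the convolution of `f` with
the kernel `u ^ (-α)` vanishes on `(0, T]`. Convolving once more with the complementary kernel
`u ^ (α - 1)` and using associativity (Fubini) gives
`0 = ((f ⋆ u ^ (-α)) ⋆ u ^ (α - 1)) t = (f ⋆ (u ^ (-α) ⋆ u ^ (α - 1))) t = B ∫₀ᵗ f`, since
`u ^ (-α) ⋆ u ^ (α - 1)` is the nonzero constant `B = B(1 - α, α) = Γ(1 - α) Γ(α)`
(`truncKernel_conv_truncKernel`). So the primitive of `f` vanishes on `(0, T)`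
(`primitive_eq_zero_of_conv_eq_zero`), and `f = 0` almost everywhere by the Lebesgue
differentiation theorem (`ae_eq_zero_of_primitive_eq_zero`).
Truncating the kernels to `(0, T]` makes them integrable on `ℝ`, so that convolutions exist almost
everywhere, without changing the convolutions at points of `(0, T]`.
-/

open MeasureTheory

/-- The Riemann–Liouville fractional integral of a complex-valued function,
`I^α ψ (t) = (1/Γ(α)) ∫₀ᵗ (t−τ)^{α−1} ψ(τ) dτ`. -/
noncomputable def fracIntC (α : ℝ) (ψ : ℝ → ℂ) (t : ℝ) : ℂ :=
  (1 / Real.Gamma α) • ∫ τ in (0 : ℝ)..t, ((t - τ) ^ (α - 1) : ℝ) • ψ τ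

open Set Filter Topology
open scoped Convolution

/-- The kernel `u ^ r` truncated to `(0, T]`, as a complex-valued function on the line. -/
noncomputable def truncKernel (T r : ℝ) : ℝ → ℂ :=
  (Ioc 0 T).indicator fun u => ((u ^ r : ℝ) : ℂ)

lemma integrable_truncKernel {T r : ℝ} (hT : 0 < T) (hr : -1 < r) :
    Integrable (truncKernel T r) := by
  unfold truncKernel
  rw [integrable_indicator_iff measurableSet_Ioc]
  have h := (intervalIntegral.intervalIntegrable_rpow' (a := 0) (b := T) hr)
  rw [intervalIntegrable_iff_integrableOn_Ioc_of_le hT.le] at h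
  exact h.ofReal

/-- Causality: at times `t ≤ T` the truncation of the kernel is invisible. -/
lemma conv_truncKernel_eq {T r t : ℝ} (g : ℝ → ℂ) (hg : ∀ s ≤ 0, g s = 0)
    (ht0 : 0 ≤ t) (htT : t ≤ T) :
    (g ⋆[ContinuousLinearMap.mul ℝ ℂ, volume] truncKernel T r) t
      = ∫ s in (0 : ℝ)..t, g s * (((t - s) ^ r : ℝ) : ℂ) := by
  rw [convolution_def, intervalIntegral.integral_of_le ht0, integral_Ioc_eq_integral_Ioo,
    ← integral_indicator measurableSet_Ioo]
  congr 1
  ext s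
  by_cases hs : s ∈ Ioo 0 t
  · have : t - s ∈ Ioc 0 T := ⟨by linarith [hs.2], by linarith [hs.1]⟩
    simp [truncKernel, hs, this]
  · rw [indicator_of_notMem hs]
    rcases le_or_gt s 0 with h0 | h0
    · simp [hg s h0]
    · have : t - s ∉ Ioc 0 T := fun h => hs ⟨h0, by linarith [h.1]⟩
      simp [truncKernel, this]

/-- Euler's Beta integral: the two complementary kernels convolve to a constant. -/
lemma truncKernel_conv_truncKernel {T α t : ℝ} (ht0 : 0 < t) (htT : t ≤ T) :
    (truncKernel T (-α) ⋆[ContinuousLinearMap.mul ℝ ℂ, volume] truncKernel T (α - 1)) t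
      = Complex.betaIntegral (1 - α) α := by
  rw [conv_truncKernel_eq _ _ ht0.le htT]
  · have h := Complex.betaIntegral_scaled (1 - α) α ht0
    rw [show (1 - α + α - 1 : ℂ) = 0 by ring, Complex.cpow_zero, one_mul] at h
    rw [← h]
    apply intervalIntegral.integral_congr_ae
    filter_upwards with s hs
    rw [uIoc_of_le ht0.le] at hs
    have hsT : s ∈ Ioc 0 T := ⟨hs.1, hs.2.trans htT⟩
    rw [truncKernel, indicator_of_mem hsT, Complex.ofReal_cpow hs.1.le,
      Complex.ofReal_cpow (by linarith [hs.2])]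
    push_cast
    ring_nf
  · intro s hs
    exact indicator_of_notMem (fun h => absurd h.1 (not_lt.mpr hs)) _

lemma betaIntegral_one_sub_ne_zero {α : ℝ} (hα0 : 0 < α) (hα1 : α < 1) :
    Complex.betaIntegral (1 - α) α ≠ 0 := by
  have h1 : 0 < (1 - α : ℂ).re := by simpa using hα1
  have h2 : 0 < (α : ℂ).re := by simpa using hα0
  have h := Complex.Gamma_mul_Gamma_eq_betaIntegral h1 h2
  intro h0
  rw [h0, mul_zero] at h
  exact mul_ne_zero (Complex.Gamma_ne_zero_of_re_pos h1) (Complex.Gamma_ne_zero_of_re_pos h2) h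

/-- Associativity of convolution turns vanishing of `f ⋆ u ^ (-α)` into vanishing of the primitive
of `f`. Convolutions exist only almost everywhere, hence the almost-everywhere conclusion. -/
lemma primitive_eq_zero_of_conv_eq_zero {T α : ℝ} (hT : 0 < T) (hα0 : 0 < α) (hα1 : α < 1)
    {f : ℝ → ℂ} (hf : Integrable f) (hf0 : ∀ s ≤ 0, f s = 0)
    (h : ∀ t ∈ Ioc 0 T,
      (f ⋆[ContinuousLinearMap.mul ℝ ℂ, volume] truncKernel T (-α)) t = 0) :
    ∀ᵐ t, t ∈ Ioo 0 T → ∫ s in (0 : ℝ)..t, f s = 0 := by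
  have hk : Integrable (truncKernel T (-α)) := integrable_truncKernel hT (by linarith)
  have hl : Integrable (truncKernel T (α - 1)) := integrable_truncKernel hT (by linarith)
  have hkl := hk.norm.integrable_convolution (ContinuousLinearMap.mul ℝ ℝ) hl.norm
  filter_upwards [hf.norm.ae_convolution_exists (ContinuousLinearMap.mul ℝ ℝ) hkl] with t hex ht
  have assoc := convolution_assoc (ContinuousLinearMap.mul ℝ ℂ) (ContinuousLinearMap.mul ℝ ℂ)
    (ContinuousLinearMap.mul ℝ ℂ) (ContinuousLinearMap.mul ℝ ℂ)
    (fun x y z => by simp [mul_assoc]) hf.aestronglyMeasurable hk.aestronglyMeasurable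
    hl.aestronglyMeasurable (hf.ae_convolution_exists _ hk)
    (hk.norm.ae_convolution_exists _ hl.norm) hex
  have hL : ((f ⋆[ContinuousLinearMap.mul ℝ ℂ, volume] truncKernel T (-α))
      ⋆[ContinuousLinearMap.mul ℝ ℂ, volume] truncKernel T (α - 1)) t = 0 := by
    rw [convolution_def]
    refine integral_eq_zero_of_ae (Eventually.of_forall fun s => ?_)
    by_cases hst : t - s ∈ Ioc 0 T
    · have hs : (f ⋆[ContinuousLinearMap.mul ℝ ℂ, volume] truncKernel T (-α)) s = 0 := by
        rcases le_or_gt s 0 with h0 | h0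
        · rw [convolution_def]
          refine integral_eq_zero_of_ae (Eventually.of_forall fun τ => ?_)
          rcases le_or_gt τ 0 with h1 | h1
          · simp [hf0 τ h1]
          · have : s - τ ∉ Ioc 0 T := fun h => by linarith [h.1]
            simp [truncKernel, this]
        · exact h s ⟨h0, by linarith [hst.1, ht.2]⟩
      simp [hs]
    · simp [truncKernel, hst]
  have hR : (f ⋆[ContinuousLinearMap.mul ℝ ℂ, volume]
      (truncKernel T (-α) ⋆[ContinuousLinearMap.mul ℝ ℂ, volume] truncKernel T (α - 1))) t
      = (∫ s in (0 : ℝ)..t, f s) * Complex.betaIntegral (1 - α) α := by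
    rw [convolution_def, intervalIntegral.integral_of_le ht.1.le, integral_Ioc_eq_integral_Ioo,
      ← integral_mul_const, ← integral_indicator measurableSet_Ioo]
    congr 1
    ext s
    by_cases hs : s ∈ Ioo 0 t
    · rw [indicator_of_mem hs, truncKernel_conv_truncKernel (by linarith [hs.2])
        (by linarith [hs.1, ht.2])]
      rfl
    · rw [indicator_of_notMem hs]
      rcases le_or_gt s 0 with h0 | h0
      · simp [hf0 s h0]
      · -- the inner convolution vanishes at the nonpositive point `t - s`
        have hts : t - s ≤ 0 := by
          by_contra hc
          exact hs ⟨h0, by linarith⟩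
        have hz : (truncKernel T (-α) ⋆[ContinuousLinearMap.mul ℝ ℂ, volume]
            truncKernel T (α - 1)) (t - s) = 0 := by
          rw [convolution_def]
          refine integral_eq_zero_of_ae (Eventually.of_forall fun τ => ?_)
          by_cases h1 : τ ∈ Ioc 0 T
          · have : t - s - τ ∉ Ioc 0 T := fun h => by linarith [h.1, h1.1]
            simp [truncKernel, this]
          · simp [truncKernel, h1]
        rw [hz, map_zero]
  rw [hL, hR] at assoc
  exact (mul_eq_zero.mp assoc.symm).resolve_right (betaIntegral_one_sub_ne_zero hα0 hα1)

lemma ae_eq_zero_of_primitive_eq_zero {T : ℝ} {f : ℝ → ℂ} (hf : Integrable f)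
    (h : ∀ᵐ t, t ∈ Ioo 0 T → ∫ s in (0 : ℝ)..t, f s = 0) :
    ∀ᵐ t, t ∈ Ioo 0 T → f t = 0 := by
  have hcont : Continuous fun t => ∫ s in (0 : ℝ)..t, f s :=
    intervalIntegral.continuous_primitive (fun _ _ => hf.intervalIntegrable) 0
  have hall : EqOn (fun t => ∫ s in (0 : ℝ)..t, f s) (fun _ => 0) (Ioo 0 T) :=
    Measure.eqOn_open_of_ae_eq ((ae_restrict_iff' measurableSet_Ioo).mpr h) isOpen_Ioo
      hcont.continuousOn continuousOn_const
  filter_upwards [LocallyIntegrable.ae_hasDerivAt_integral hf.locallyIntegrable] with t hd ht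
  exact (hd 0).unique ((hasDerivAt_const t (0 : ℂ)).congr_of_eventuallyEq
    (hall.eventuallyEq_of_mem (isOpen_Ioo.mem_nhds ht)))

/-- **Vanishing Caputo derivative implies constancy (conservation of mass).**
Let `α ∈ (0,1)`, `φ : [0,T] → ℂ` integrable and `c ∈ ℂ`. If
`I^{1−α}(φ − c)(t) = 0` for every `t ∈ [0,T]` (i.e. the Caputo fractional derivative
of `φ` of order `α` with initial value `c` vanishes), then `φ(t) = c` for almost
every `t ∈ [0,T]`. In particular the zeroth Fourier mode of a weak solution of the
fractional Fokker–Planck equation with mean-zero source is constant in time, so the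
total mass is conserved. -/
theorem vanishing_caputo_implies_constant (α T : ℝ) (hα0 : 0 < α) (hα1 : α < 1)
    (hT : 0 < T) (φ : ℝ → ℂ) (c : ℂ)
    (hφ : IntegrableOn φ (Set.Icc 0 T))
    (hzero : ∀ t ∈ Set.Icc (0 : ℝ) T, fracIntC (1 - α) (fun s => φ s - c) t = 0) :
    ∀ᵐ t ∂(volume.restrict (Set.Icc (0 : ℝ) T)), φ t = c := by
  have hint : Integrable ((Ioc 0 T).indicator fun s => φ s - c) := by
    rw [integrable_indicator_iff measurableSet_Ioc]
    exact (hφ.mono_set Ioc_subset_Icc_self).sub (integrableOn_const (by simp))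
  have hneg : ∀ s ≤ 0, (Ioc 0 T).indicator (fun s => φ s - c) s = 0 := fun s hs =>
    indicator_of_notMem (fun h => absurd h.1 (not_lt.mpr hs)) _
  have hconv : ∀ t ∈ Ioc 0 T, ((Ioc 0 T).indicator (fun s => φ s - c)
      ⋆[ContinuousLinearMap.mul ℝ ℂ, volume] truncKernel T (-α)) t = 0 := by
    intro t ht
    have hz := hzero t ⟨ht.1.le, ht.2⟩
    rw [fracIntC, smul_eq_zero] at hz
    have hG : (1 / Real.Gamma (1 - α)) ≠ 0 :=
      one_div_ne_zero (Real.Gamma_pos_of_pos (by linarith)).ne'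
    rw [conv_truncKernel_eq _ hneg ht.1.le ht.2, ← hz.resolve_left hG]
    apply intervalIntegral.integral_congr_ae
    filter_upwards with s hs
    rw [uIoc_of_le ht.1.le] at hs
    have hsT : s ∈ Ioc 0 T := ⟨hs.1, hs.2.trans ht.2⟩
    rw [indicator_of_mem hsT, Complex.real_smul, mul_comm, show 1 - α - 1 = -α by ring]
  have hmain := ae_eq_zero_of_primitive_eq_zero hint
    (primitive_eq_zero_of_conv_eq_zero hT hα0 hα1 hint hneg hconv)
  rw [Measure.restrict_congr_set Ioo_ae_eq_Icc.symm, ae_restrict_iff' measurableSet_Ioo]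
  filter_upwards [hmain] with t h ht
  have := h ht
  rw [indicator_of_mem (Ioo_subset_Ioc_self ht)] at this
  exact sub_eq_zero.mp this
end
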